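/- arXiv:2105.11230 — 3 statements merged into one kernel-verified Lean document; each statement's English description precedes it below -/
import Mathlib

section
/- Let ℓ > 5 be a prime, r ≥ 1, and G a subgroup of GL₂(ℤ/ℓʳℤ). Then PSL₂(ℤ/ℓℤ) ∈ Occ(G) if and only if SL₂(ℤ/ℓʳℤ) ⊆ G. -/
/-- `MemOcc G S` : the non-abelian simple group `S` occurs among the composition
factors of `G`. -/
def MemOcc (G : Type) [Group G] (S : Type) [Group S] : Prop :=
  IsSimpleGroup S ∧ (∃ a b : S, a * b ≠ b * a) ∧
    ∃ (K : Subgroup G) (f : ↥K →* S), Function.Surjective f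

/-- `PSL₂(ℤ/ℓℤ) = SL₂(ℤ/ℓℤ)/{±I}`, realized as the quotient by the center. -/
abbrev PSL2 (ℓ : ℕ) : Type :=
  Matrix.SpecialLinearGroup (Fin 2) (ZMod ℓ) ⧸
    Subgroup.center (Matrix.SpecialLinearGroup (Fin 2) (ZMod ℓ))

/-- The binomial expansion of `(1 + y) ^ p` up to second order, `p` prime. -/
lemma exists_one_add_pow_prime_eq {R A : Type*} [CommRing R] [Ring A] [Algebra R A] {p : ℕ}
    (hp : p.Prime) (y : A) :
    ∃ s : A, (1 + y) ^ p = 1 + (p : R) • y + (p : R) • (y ^ 2 * s) + y ^ p := by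
  refine ⟨∑ k ∈ Finset.Ioo 1 p, y ^ (k - 2) * ((p.choose k / p : ℕ) : A), ?_⟩
  have h := (Commute.one_right y).add_pow_prime_eq hp
  have h1 : Finset.Ioo 0 p = insert 1 (Finset.Ioo 1 p) := by
    have := hp.two_le
    ext k
    simp only [Finset.mem_Ioo, Finset.mem_insert]
    omega
  have hsum : y * ∑ k ∈ Finset.Ioo 1 p, y ^ (k - 1) * ((p.choose k / p : ℕ) : A) =
      y ^ 2 * ∑ k ∈ Finset.Ioo 1 p, y ^ (k - 2) * ((p.choose k / p : ℕ) : A) := by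
    rw [Finset.mul_sum, Finset.mul_sum]
    refine Finset.sum_congr rfl fun k hk ↦ ?_
    obtain ⟨j, rfl⟩ : ∃ j, k = j + 2 := ⟨k - 2, by have := (Finset.mem_Ioo.1 hk).1; omega⟩
    simp only [Nat.add_sub_cancel, show j + 2 - 1 = j + 1 by omega, ← mul_assoc, ← pow_succ',
      ← pow_add]
    congr 2
    omega
  rw [h1, Finset.sum_insert (by simp)] at h
  simp only [one_pow, mul_one, Nat.choose_one_right, Nat.div_self hp.pos, Nat.cast_one,
    Nat.sub_self, pow_zero, mul_add] at h
  rw [mul_assoc, hsum] at h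
  rw [add_comm 1 y, h, Nat.cast_smul_eq_nsmul, Nat.cast_smul_eq_nsmul, nsmul_eq_mul, nsmul_eq_mul]
  abel

/-- The `p`-th power of `1 + u + p v` is `1 + p u` modulo `p²` when `u² = 0` and `p ≥ 4`. -/
lemma exists_pow_prime_eq_of_sq_eq_zero {R A : Type*} [CommRing R] [Ring A] [Algebra R A] {p : ℕ}
    (hp : p.Prime) (h4 : 4 ≤ p) {u : A} (hu : u * u = 0) (v : A) :
    ∃ w : A, (1 + u + (p : R) • v) ^ p = 1 + (p : R) • u + (p : R) ^ 2 • w := by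
  obtain ⟨s, hs⟩ := exists_one_add_pow_prime_eq (R := R) hp (u + (p : R) • v)
  obtain ⟨z, hz⟩ : ∃ z : A, (u + (p : R) • v) ^ 2 = (p : R) • z := by
    refine ⟨u * v + v * u + (p : R) • (v * v), ?_⟩
    simp only [sq, add_mul, mul_add, smul_mul_assoc, mul_smul_comm, hu]
    module
  have h5 : (u + (p : R) • v) ^ p = (p : R) ^ 2 • (z * z * (u + (p : R) • v) ^ (p - 4)) := by
    obtain ⟨j, rfl⟩ := Nat.exists_eq_add_of_le h4
    rw [pow_add, show 4 = 2 * 2 from rfl, pow_mul, hz, sq]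
    simp only [smul_mul_assoc, mul_smul_comm, smul_smul, Nat.add_sub_cancel_left]
    rw [← sq]
  refine ⟨v + z * s + z * z * (u + (p : R) • v) ^ (p - 4), ?_⟩
  rw [add_assoc, hs, hz, h5]
  simp only [smul_mul_assoc]
  module

/-- The `p`-th power of `1 + pⁿ u + pⁿ⁺¹ v` is `1 + pⁿ⁺¹ u` modulo `pⁿ⁺²` when `n ≥ 1`. -/
lemma exists_pow_prime_eq {R A : Type*} [CommRing R] [Ring A] [Algebra R A] {p : ℕ}
    (hp : p.Prime) (h3 : 3 ≤ p) {n : ℕ} (hn : 1 ≤ n) (u v : A) :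
    ∃ w : A, (1 + (p : R) ^ n • u + (p : R) ^ (n + 1) • v) ^ p =
      1 + (p : R) ^ (n + 1) • u + (p : R) ^ (n + 2) • w := by
  obtain ⟨m, rfl⟩ := Nat.exists_eq_add_of_le' hn
  set q : R := (p : R)
  set x : A := u + q • v with hx
  obtain ⟨s, hs⟩ := exists_one_add_pow_prime_eq (R := R) hp (q ^ (m + 1) • x)
  have hpow : (q ^ (m + 1) • x) ^ p = (q ^ (m + 1) • x) ^ 3 * (q ^ (m + 1) • x) ^ (p - 3) := by
    rw [← pow_add, Nat.add_sub_cancel' h3]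
  refine ⟨v + q ^ m • (x ^ 2 * s) + q ^ (2 * m) • (x ^ 3 * (q ^ (m + 1) • x) ^ (p - 3)), ?_⟩
  rw [add_assoc, show q ^ (m + 1) • u + q ^ (m + 1 + 1) • v = q ^ (m + 1) • x by
    rw [hx]; module, hs, hpow, smul_pow _ x 3, smul_pow _ x 2]
  simp only [smul_mul_assoc]
  rw [show q • q ^ (m + 1) • x = q ^ (m + 2) • u + q ^ (m + 3) • v by rw [hx]; module]
  module

section CongruenceSubgroups

variable {R : Type*} [CommRing R] {p : ℕ}

local notation "SL₂" => Matrix.SpecialLinearGroup (Fin 2)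

/-- An element of the principal congruence subgroup of level `p` has `p`-power order when `p` is
nilpotent. -/
lemma pow_prime_pow_eq_one (hp : p.Prime) (h3 : 3 ≤ p) {r : ℕ} (hr : (p : R) ^ r = 0)
    {x : SL₂ R} {u : Matrix (Fin 2) (Fin 2) R} (hx : (x : Matrix (Fin 2) (Fin 2) R) =
      1 + (p : R) • u) : x ^ p ^ r = 1 := by
  have key : ∀ n, ∃ v : Matrix (Fin 2) (Fin 2) R,
      ((x ^ p ^ n : SL₂ R) : Matrix (Fin 2) (Fin 2) R) = 1 + (p : R) ^ (n + 1) • v := by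
    intro n
    induction n with
    | zero => exact ⟨u, by simpa using hx⟩
    | succ n ih =>
      obtain ⟨v, hv⟩ := ih
      obtain ⟨w, hw⟩ := exists_pow_prime_eq (R := R) hp h3 (n := n + 1) (by omega) v 0
      refine ⟨v + (p : R) • w, ?_⟩
      rw [pow_succ, pow_mul, Matrix.SpecialLinearGroup.coe_pow, hv]
      rw [smul_zero, add_zero] at hw
      rw [hw]
      module
  obtain ⟨v, hv⟩ := key r
  apply Subtype.ext
  rw [hv, pow_succ, hr]
  simp

/-- `K` contains an element congruent to `1 + pⁿ u` modulo `pⁿ⁺¹`. -/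
def HasLeadingTerm (p : ℕ) (K : Subgroup (SL₂ R)) (n : ℕ) (u : Matrix (Fin 2) (Fin 2) R) : Prop :=
  ∃ k ∈ K, ∃ v : Matrix (Fin 2) (Fin 2) R,
    (k : Matrix (Fin 2) (Fin 2) R) = 1 + (p : R) ^ n • u + (p : R) ^ (n + 1) • v

lemma HasLeadingTerm.add {K : Subgroup (SL₂ R)} {n : ℕ} (hn : 1 ≤ n)
    {u u' : Matrix (Fin 2) (Fin 2) R} (h : HasLeadingTerm p K n u) (h' : HasLeadingTerm p K n u') :
    HasLeadingTerm p K n (u + u') := by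
  obtain ⟨k, hk, v, hv⟩ := h
  obtain ⟨k', hk', v', hv'⟩ := h'
  obtain ⟨m, rfl⟩ := Nat.exists_eq_add_of_le' hn
  refine ⟨k * k', mul_mem hk hk',
    v + v' + (p : R) ^ m • ((u + (p : R) • v) * (u' + (p : R) • v')), ?_⟩
  rw [Matrix.SpecialLinearGroup.coe_mul, hv, hv']
  simp only [add_mul, mul_add, one_mul, mul_one, smul_mul_assoc, mul_smul_comm]
  module

lemma HasLeadingTerm.succ {K : Subgroup (SL₂ R)} (hp : p.Prime) (h3 : 3 ≤ p) {n : ℕ} (hn : 1 ≤ n)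
    {u : Matrix (Fin 2) (Fin 2) R} (h : HasLeadingTerm p K n u) :
    HasLeadingTerm p K (n + 1) u := by
  obtain ⟨k, hk, v, hv⟩ := h
  obtain ⟨w, hw⟩ := exists_pow_prime_eq (R := R) hp h3 hn u v
  exact ⟨k ^ p, pow_mem hk p, w, by rw [Matrix.SpecialLinearGroup.coe_pow, hv, hw]⟩

lemma hasLeadingTerm_of_sq_eq_zero {K : Subgroup (SL₂ R)} (hp : p.Prime) (h4 : 4 ≤ p)
    (hK : ∀ g : SL₂ R, ∃ k ∈ K, ∃ v : Matrix (Fin 2) (Fin 2) R,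
      (k : Matrix (Fin 2) (Fin 2) R) = g + (p : R) • v)
    {u : Matrix (Fin 2) (Fin 2) R} (hu : u * u = 0) (hdet : (1 + u).det = 1) {n : ℕ} (hn : 1 ≤ n) :
    HasLeadingTerm p K n u := by
  induction n, hn using Nat.le_induction with
  | base =>
    obtain ⟨k, hk, v, hv⟩ := hK ⟨1 + u, hdet⟩
    obtain ⟨w, hw⟩ := exists_pow_prime_eq_of_sq_eq_zero (R := R) hp h4 hu v
    refine ⟨k ^ p, pow_mem hk p, w, ?_⟩
    rwa [Matrix.SpecialLinearGroup.coe_pow, hv, pow_one]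
  | succ n hn ih => exact ih.succ hp (by omega) hn

lemma hasLeadingTerm_of_dvd_trace {K : Subgroup (SL₂ R)} (hp : p.Prime) (h4 : 4 ≤ p)
    (hK : ∀ g : SL₂ R, ∃ k ∈ K, ∃ v : Matrix (Fin 2) (Fin 2) R,
      (k : Matrix (Fin 2) (Fin 2) R) = g + (p : R) • v)
    {w : Matrix (Fin 2) (Fin 2) R} (hw : (p : R) ∣ w.trace) {n : ℕ} (hn : 1 ≤ n) :
    HasLeadingTerm p K n w := by
  obtain ⟨t, ht⟩ := hw
  have h1 : HasLeadingTerm p K n !![0, w 0 1 + w 0 0; 0, 0] :=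
    hasLeadingTerm_of_sq_eq_zero hp h4 hK (by simp [← Matrix.ext_iff])
      (by simp [Matrix.one_fin_two]) hn
  have h2 : HasLeadingTerm p K n !![0, 0; w 1 0 - w 0 0, 0] :=
    hasLeadingTerm_of_sq_eq_zero hp h4 hK (by simp [← Matrix.ext_iff])
      (by simp [Matrix.one_fin_two]) hn
  have h3 : HasLeadingTerm p K n !![w 0 0, - w 0 0; w 0 0, - w 0 0] :=
    hasLeadingTerm_of_sq_eq_zero hp h4 hK (by simp [← Matrix.ext_iff])
      (by simp only [Matrix.one_fin_two, Matrix.det_fin_two, Matrix.add_apply, Matrix.of_apply,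
            Matrix.cons_val', Matrix.cons_val_zero, Matrix.cons_val_one, Matrix.cons_val_fin_one]
          ring) hn
  obtain ⟨k, hk, v, hv⟩ := (h1.add hn h2).add hn h3
  refine ⟨k, hk, v - !![0, 0; 0, t], hv.trans ?_⟩
  rw [Matrix.trace_fin_two] at ht
  have hdecomp : !![0, w 0 1 + w 0 0; 0, 0] + !![0, 0; w 1 0 - w 0 0, 0] +
      !![w 0 0, - w 0 0; w 0 0, - w 0 0] = w - (p : R) • !![0, 0; 0, t] := by
    ext i j
    fin_cases i <;> fin_cases j <;> simp
    linear_combination -ht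
  rw [hdecomp]
  module

/-- Serre's lifting lemma: a subgroup of `SL₂(R)` that meets every class modulo `p ≥ 5` is
everything, when `R` behaves like `ℤ/pʳℤ`. -/
lemma eq_top_of_forall_exists_congr {K : Subgroup (SL₂ R)} (hp : p.Prime) (h4 : 4 ≤ p) {r : ℕ}
    (hr : (p : R) ^ r = 0) (hann : ∀ n < r, ∀ a : R, (p : R) ^ n * a = 0 → (p : R) ∣ a)
    (hK : ∀ g : SL₂ R, ∃ k ∈ K, ∃ v : Matrix (Fin 2) (Fin 2) R,
      (k : Matrix (Fin 2) (Fin 2) R) = g + (p : R) • v) : K = ⊤ := by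
  have key : ∀ n ≤ r, ∀ g : SL₂ R, ∃ k ∈ K, ∃ v : Matrix (Fin 2) (Fin 2) R,
      (k : Matrix (Fin 2) (Fin 2) R) = g + (p : R) ^ n • v := by
    intro n
    induction n with
    | zero => exact fun _ g ↦ ⟨1, one_mem K, 1 - (g : Matrix (Fin 2) (Fin 2) R), by simp⟩
    | succ n ih =>
      intro hnr g
      rcases Nat.eq_zero_or_pos n with rfl | hn
      · simpa using hK g
      obtain ⟨k, hk, v, hv⟩ := ih (by omega) g
      have hg : (g : Matrix (Fin 2) (Fin 2) R) * (g⁻¹ : SL₂ R) = 1 := by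
        rw [← Matrix.SpecialLinearGroup.coe_mul, mul_inv_cancel, Matrix.SpecialLinearGroup.coe_one]
      set w : Matrix (Fin 2) (Fin 2) R := v * (g⁻¹ : SL₂ R)
      have hkg : ((k * g⁻¹ : SL₂ R) : Matrix (Fin 2) (Fin 2) R) = 1 + (p : R) ^ n • w := by
        rw [Matrix.SpecialLinearGroup.coe_mul, hv, add_mul, hg, smul_mul_assoc]
      have htr : (p : R) ∣ w.trace := by
        have hdet : (1 + (p : R) ^ n • w).det = 1 := by
          rw [← hkg]; exact Matrix.SpecialLinearGroup.det_coe _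
        rw [Matrix.det_fin_two] at hdet
        simp only [Matrix.add_apply, Matrix.smul_apply, smul_eq_mul, Matrix.one_apply_eq,
          Matrix.one_apply_ne zero_ne_one, Matrix.one_apply_ne one_ne_zero, zero_add] at hdet
        have h0 : (p : R) ^ n * (w.trace + (p : R) ^ n * w.det) = 0 := by
          rw [Matrix.trace_fin_two, Matrix.det_fin_two]
          linear_combination hdet
        exact (dvd_add_left ((dvd_pow_self _ (by omega)).mul_right _)).1 (hann n (by omega) _ h0)
      obtain ⟨k', hk', v', hv'⟩ := hasLeadingTerm_of_dvd_trace hp h4 hK htr hn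
      rw [← hkg] at hv'
      have hk'1 : ((k'⁻¹ : SL₂ R) : Matrix (Fin 2) (Fin 2) R) * k' = 1 := by
        rw [← Matrix.SpecialLinearGroup.coe_mul, inv_mul_cancel, Matrix.SpecialLinearGroup.coe_one]
      refine ⟨k'⁻¹ * k, mul_mem (inv_mem hk') hk,
        -(((k'⁻¹ : SL₂ R) : Matrix (Fin 2) (Fin 2) R) * v' * g), ?_⟩
      have h2 : ((k'⁻¹ * (k * g⁻¹) * g : SL₂ R) : Matrix (Fin 2) (Fin 2) R) =
          g + (p : R) ^ (n + 1) • -(((k'⁻¹ : SL₂ R) : Matrix (Fin 2) (Fin 2) R) * v' * g) := by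
        rw [Matrix.SpecialLinearGroup.coe_mul, Matrix.SpecialLinearGroup.coe_mul _ (k * g⁻¹),
          eq_sub_of_add_eq hv'.symm, mul_sub, hk'1]
        simp only [sub_mul, one_mul, mul_smul_comm, smul_mul_assoc, smul_neg]
        abel
      rw [← h2, ← mul_assoc, inv_mul_cancel_right]
  refine eq_top_iff.2 fun g _ ↦ ?_
  obtain ⟨k, hk, v, hv⟩ := key r le_rfl g
  rw [hr, zero_smul, add_zero] at hv
  rwa [← Subtype.ext hv]

end CongruenceSubgroups

section SimpleQuotients

open scoped commutatorElement

variable {D S : Type*} [Group D] [Group S]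

/-- A normal `p`-subgroup dies in every finite non-abelian simple quotient. -/
lemma le_ker_of_isPGroup [Finite S] [IsSimpleGroup S] (hS : ∃ a b : S, a * b ≠ b * a)
    {p : ℕ} (hp : p.Prime) {f : D →* S} (hf : Function.Surjective f) {N : Subgroup D}
    [hN : N.Normal] (hNp : IsPGroup p N) : N ≤ f.ker := by
  have := Fact.mk hp
  rcases (hN.map f hf).eq_bot_or_eq_top with h | h
  · exact (Subgroup.map_eq_bot_iff N).1 h
  · have h1 : IsPGroup p (⊤ : Subgroup S) := h ▸ hNp.map f
    have h2 : IsPGroup p S := h1.of_equiv Subgroup.topEquiv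
    have := h2.isNilpotent
    have h3 : Group.IsSolvable S := inferInstance
    obtain ⟨a, b, hab⟩ := hS
    exact absurd (IsSimpleGroup.comm_iff_isSolvable.2 h3 a b) hab

/-- The kernel of a homomorphism to a commutative group surjects onto every non-abelian simple
quotient. -/
lemma surjective_comp_subtype_ker [IsSimpleGroup S] (hS : ∃ a b : S, a * b ≠ b * a)
    {f : D →* S} (hf : Function.Surjective f) {C : Type*} [CommGroup C] (d : D →* C) :
    Function.Surjective (f.comp d.ker.subtype) := by
  have hn : (d.ker.map f).Normal := Subgroup.Normal.map inferInstance f hf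
  rcases hn.eq_bot_or_eq_top with h | h
  · obtain ⟨a, b, hab⟩ := hS
    obtain ⟨x, rfl⟩ := hf a
    obtain ⟨y, rfl⟩ := hf b
    refine absurd ?_ hab
    have hk : ⁅x, y⁆ ∈ f.ker := (Subgroup.map_eq_bot_iff _).1 h <| by
      rw [MonoidHom.mem_ker, map_commutatorElement, commutatorElement_eq_one_iff_mul_comm,
        mul_comm]
    rwa [MonoidHom.mem_ker, map_commutatorElement, commutatorElement_eq_one_iff_mul_comm] at hk
  · rw [← MonoidHom.range_eq_top, MonoidHom.range_comp, Subgroup.range_subtype, h]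

end SimpleQuotients

section FiniteField

variable {F : Type*} [Field F]

/-- A subgroup of `SL₂(F)` of index at most two is everything. -/
lemma eq_top_of_index_le_two [Finite F] (hF : ∃ a : F, a ≠ 0 ∧ a ^ 2 ≠ 1)
    {H : Subgroup (Matrix.SpecialLinearGroup (Fin 2) F)} (hH : H.index ≤ 2) : H = ⊤ := by
  have h0 : H.index ≠ 0 := Subgroup.index_ne_zero_of_finite
  obtain h | h : H.index = 1 ∨ H.index = 2 := by omega
  · exact Subgroup.index_eq_one.1 h
  · obtain ⟨a, ha, ha2⟩ := hF
    have := Subgroup.normal_of_index_eq_two h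
    rw [eq_top_iff, ← Matrix.SL2.commutator_eq_top ha ha2, commutator_def,
      Subgroup.commutator_le]
    intro x _ y _
    have h1 := Subgroup.mul_mem_iff_of_index_two h (a := x) (b := y)
    rw [commutatorElement_def, mul_assoc, mul_assoc]
    simp only [Subgroup.mul_mem_iff_of_index_two h, inv_mem_iff]
    tauto

/-- A group mapping to `SL₂(F)`, and onto `PSL₂(F)` through its image, surjects onto `SL₂(F)`. -/
lemma surjective_of_ker_le_ker [Finite F] {D : Type*} [Group D]
    (hF : ∃ a : F, a ≠ 0 ∧ a ^ 2 ≠ 1)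
    (q : D →* Matrix.SpecialLinearGroup (Fin 2) F)
    {f : D →* Matrix.SpecialLinearGroup (Fin 2) F ⧸
      Subgroup.center (Matrix.SpecialLinearGroup (Fin 2) F)}
    (hf : Function.Surjective f) (h : q.ker ≤ f.ker) : Function.Surjective q := by
  rw [← MonoidHom.range_eq_top]
  refine eq_top_of_index_le_two hF ?_
  have h1 := Subgroup.index_dvd_of_le h
  rw [Subgroup.index_ker, Subgroup.index_ker, MonoidHom.range_eq_top.2 hf, Subgroup.card_top] at h1
  have h2 := Subgroup.card_mul_index q.range
  have h3 := Subgroup.card_eq_card_quotient_mul_card_subgroup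
    (Subgroup.center (Matrix.SpecialLinearGroup (Fin 2) F))
  have h4 : Nat.card (Subgroup.center (Matrix.SpecialLinearGroup (Fin 2) F)) ≤ 2 := by
    have : NeZero (Fintype.card (Fin 2)) := ⟨by simp⟩
    rw [Nat.card_congr (Matrix.SpecialLinearGroup.center_equiv_rootsOfUnity' (0 : Fin 2)).toEquiv]
    exact (card_rootsOfUnity F _).trans (by simp)
  have h5 : 0 < Nat.card q.range := Nat.card_pos
  have h6 := Nat.le_of_dvd h5 h1
  refine Nat.le_of_mul_le_mul_left ?_ h5
  rw [h2, h3]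
  exact Nat.mul_le_mul h6 h4

/-- Reduction `SL₂(R) → SL₂(F)` is surjective if `R → F` is. -/
lemma surjective_map_SL2 {R : Type*} [CommRing R] {π : R →+* F} (hπ : Function.Surjective π) :
    Function.Surjective (Matrix.SpecialLinearGroup.map (n := Fin 2) π) := by
  intro g
  induction g using Matrix.SL2.transvection_induction with
  | htransvec i j hij a =>
    obtain ⟨b, rfl⟩ := hπ a
    refine ⟨Matrix.SpecialLinearGroup.transvection hij b, ?_⟩
    ext k l
    simp [Matrix.SpecialLinearGroup.transvection_coe, Matrix.one_apply, Matrix.single_apply,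
      apply_ite π]
  | hmul x y hx hy =>
    obtain ⟨a, rfl⟩ := hx
    obtain ⟨b, rfl⟩ := hy
    exact ⟨a * b, map_mul _ _ _⟩

end FiniteField

section ZModPrimePow

variable {ℓ r : ℕ}

lemma natCast_dvd_of_castHom_eq_zero (hr : 1 ≤ r) [NeZero ℓ] {a : ZMod (ℓ ^ r)}
    (ha : ZMod.castHom (dvd_pow_self ℓ (by omega)) (ZMod ℓ) a = 0) : (ℓ : ZMod (ℓ ^ r)) ∣ a := by
  rw [← ZMod.natCast_zmod_val a, map_natCast, ZMod.natCast_eq_zero_iff] at ha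
  rw [← ZMod.natCast_zmod_val a]
  exact Nat.cast_dvd_cast ha

lemma natCast_dvd_of_pow_mul_eq_zero [NeZero ℓ] {n : ℕ} (hn : n < r) {a : ZMod (ℓ ^ r)}
    (ha : (ℓ : ZMod (ℓ ^ r)) ^ n * a = 0) : (ℓ : ZMod (ℓ ^ r)) ∣ a := by
  rw [← ZMod.natCast_zmod_val a, ← Nat.cast_pow, ← Nat.cast_mul, ZMod.natCast_eq_zero_iff] at ha
  rw [← ZMod.natCast_zmod_val a]
  refine Nat.cast_dvd_cast (Nat.dvd_of_mul_dvd_mul_left (pow_pos (NeZero.pos ℓ) n) ?_)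
  rw [← pow_succ]
  exact (pow_dvd_pow ℓ hn).trans ha

/-- Elements of `SL₂(ℤ/ℓʳℤ)` with the same reduction are congruent modulo `ℓ`. -/
lemma exists_eq_add_smul_of_map_eq (hr : 1 ≤ r) [NeZero ℓ]
    {x y : Matrix.SpecialLinearGroup (Fin 2) (ZMod (ℓ ^ r))}
    (h : Matrix.SpecialLinearGroup.map (ZMod.castHom (dvd_pow_self ℓ (by omega)) (ZMod ℓ)) x =
      Matrix.SpecialLinearGroup.map (ZMod.castHom (dvd_pow_self ℓ (by omega)) (ZMod ℓ)) y) :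
    ∃ v : Matrix (Fin 2) (Fin 2) (ZMod (ℓ ^ r)),
      (x : Matrix (Fin 2) (Fin 2) (ZMod (ℓ ^ r))) = y + (ℓ : ZMod (ℓ ^ r)) • v := by
  have key : ∀ i j, ∃ c, x i j - y i j = (ℓ : ZMod (ℓ ^ r)) * c := fun i j ↦ by
    refine natCast_dvd_of_castHom_eq_zero hr ?_
    rw [map_sub, sub_eq_zero]
    exact (Matrix.SpecialLinearGroup.ext_iff _ _).1 h i j
  choose c hc using key
  refine ⟨Matrix.of c, ?_⟩
  ext i j
  simp [← hc]

/-- A subgroup of `SL₂(ℤ/ℓʳℤ)` with quotient `PSL₂(ℤ/ℓℤ)` is everything. -/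
lemma surjective_of_injective_of_surjective_PSL2 (hℓ : ℓ.Prime) (h5 : 5 ≤ ℓ) (hr : 1 ≤ r)
    [IsSimpleGroup (PSL2 ℓ)] (hS : ∃ a b : PSL2 ℓ, a * b ≠ b * a)
    (hF : ∃ a : ZMod ℓ, a ≠ 0 ∧ a ^ 2 ≠ 1) {D : Type*} [Group D]
    {j : D →* Matrix.SpecialLinearGroup (Fin 2) (ZMod (ℓ ^ r))} (hj : Function.Injective j)
    {f : D →* PSL2 ℓ} (hf : Function.Surjective f) : Function.Surjective j := by
  have := Fact.mk hℓ
  have hpr : (ℓ : ZMod (ℓ ^ r)) ^ r = 0 := by rw [← Nat.cast_pow, ZMod.natCast_self]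
  let q : D →* Matrix.SpecialLinearGroup (Fin 2) (ZMod ℓ) :=
    (Matrix.SpecialLinearGroup.map (ZMod.castHom (dvd_pow_self ℓ (by omega)) (ZMod ℓ))).comp j
  have hN : IsPGroup ℓ q.ker := fun x ↦ by
    obtain ⟨v, hv⟩ := exists_eq_add_smul_of_map_eq hr (x := j x) (y := 1)
      (x.2.trans (map_one _).symm)
    refine ⟨r, Subtype.ext (hj ?_)⟩
    rw [Subgroup.coe_pow, map_pow, Subgroup.coe_one, map_one]
    exact pow_prime_pow_eq_one hℓ (by omega) hpr hv
  have hq := surjective_of_ker_le_ker hF q hf (le_ker_of_isPGroup hS hℓ hf hN)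
  rw [← MonoidHom.range_eq_top]
  refine eq_top_of_forall_exists_congr hℓ (by omega) hpr
    (fun n hn a ha ↦ natCast_dvd_of_pow_mul_eq_zero hn ha) fun g ↦ ?_
  obtain ⟨d, hd⟩ := hq (Matrix.SpecialLinearGroup.map (ZMod.castHom _ (ZMod ℓ)) g)
  exact ⟨j d, ⟨d, rfl⟩, exists_eq_add_smul_of_map_eq hr hd⟩

end ZModPrimePow

/-- For `ℓ > 5` prime and `G ≤ GL₂(ℤ/ℓʳℤ)`:
`PSL₂(ℤ/ℓℤ) ∈ Occ(G)` iff `SL₂(ℤ/ℓʳℤ) ⊆ G`. -/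
theorem stmt_4 (ℓ r : ℕ) (hℓ : ℓ.Prime) (h5 : 5 < ℓ) (hr : 1 ≤ r)
    (G : Subgroup (GL (Fin 2) (ZMod (ℓ ^ r)))) :
    MemOcc ↥G (PSL2 ℓ) ↔
      (Matrix.SpecialLinearGroup.toGL :
        Matrix.SpecialLinearGroup (Fin 2) (ZMod (ℓ ^ r)) →* GL (Fin 2) (ZMod (ℓ ^ r))).range ≤ G := by
  have := Fact.mk hℓ
  have hF : ∃ a : ZMod ℓ, a ≠ 0 ∧ a ^ 2 ≠ 1 := by
    refine ⟨(2 : ℕ), fun h ↦ ?_, fun h ↦ ?_⟩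
    · exact absurd (Nat.le_of_dvd two_pos ((ZMod.natCast_eq_zero_iff 2 ℓ).1 h)) (by omega)
    · have h3 : ((3 : ℕ) : ZMod ℓ) = 0 := by
        push_cast at h ⊢
        linear_combination h
      exact absurd (Nat.le_of_dvd three_pos ((ZMod.natCast_eq_zero_iff 3 ℓ).1 h3)) (by omega)
  have hsimple : IsSimpleGroup (PSL2 ℓ) :=
    Matrix.ProjectiveSpecialLinearGroup.rank_two_simple' hF
  constructor
  · rintro ⟨-, hS, K, f, hf⟩
    let d : K →* (ZMod (ℓ ^ r))ˣ :=
      Matrix.GeneralLinearGroup.det.comp (G.subtype.comp K.subtype)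
    let j : d.ker →* Matrix.SpecialLinearGroup (Fin 2) (ZMod (ℓ ^ r)) :=
      { toFun := fun x ↦ ⟨(x.1.1.1 : Matrix (Fin 2) (Fin 2) (ZMod (ℓ ^ r))),
          congrArg Units.val (MonoidHom.mem_ker.1 x.2)⟩
        map_one' := rfl
        map_mul' := fun _ _ ↦ rfl }
    have hj : Function.Injective j := fun x y h ↦
      Subtype.ext (Subtype.ext (Subtype.ext (Units.ext (congrArg Subtype.val h))))
    rintro _ ⟨g, rfl⟩
    obtain ⟨x, rfl⟩ := surjective_of_injective_of_surjective_PSL2 hℓ h5.le hr hS hF hj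
      (surjective_comp_subtype_ker hS hf d) g
    have hx : Matrix.SpecialLinearGroup.toGL (j x) = x.1.1.1 := Units.ext rfl
    rw [hx]
    exact x.1.1.2
  · intro hG
    refine ⟨hsimple, ?_, ?_⟩
    · by_contra! hcomm
      have h1 : commutator (PSL2 ℓ) = ⊥ := (commutator_eq_bot_iff_center_eq_top _).2 <|
        Subgroup.eq_top_iff' _ |>.2 fun a ↦ Subgroup.mem_center_iff.2 fun b ↦ hcomm b a
      exact bot_ne_top (h1.symm.trans (SL2Simple.PSL_commutator_eq_top hF))
    · let i : Matrix.SpecialLinearGroup (Fin 2) (ZMod (ℓ ^ r)) →* G :=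
        Matrix.SpecialLinearGroup.toGL.codRestrict G fun g ↦ hG ⟨g, rfl⟩
      have hi : Function.Injective i := fun x y h ↦
        Matrix.SpecialLinearGroup.toGL_injective (congrArg Subtype.val h)
      refine ⟨i.range, ((QuotientGroup.mk' _).comp (Matrix.SpecialLinearGroup.map
        (ZMod.castHom (dvd_pow_self ℓ (by omega)) (ZMod ℓ)))).comp
          (MonoidHom.ofInjective hi).symm.toMonoidHom, ?_⟩
      exact ((QuotientGroup.mk'_surjective _).comp
        (surjective_map_SL2 (ZMod.castHom_surjective _))).comp
          (MonoidHom.ofInjective hi).symm.surjective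
end

section
/- Let m be a positive integer coprime to 30 and G a subgroup of GL₂(ℤ/mℤ). Then SL₂(ℤ/mℤ) ⊆ G if and only if PSL₂(ℤ/ℓℤ) ∈ Occ(G) for every prime ℓ dividing m. -/
open Matrix Subgroup
open scoped commutatorElement

/-- `S` is a quotient of a subgroup of `G`. -/
def HasSection (S : Type*) [Group S] {A : Type*} [Group A] (G : Subgroup A) : Prop :=
  ∃ K ≤ G, ∃ f : K →* S, Function.Surjective f

section Sections

variable {S A B : Type*} [Group S] [Group A] [Group B]

theorem HasSection.mono {G H : Subgroup A} (h : HasSection S G) (hGH : G ≤ H) :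
    HasSection S H := by
  obtain ⟨K, hK, f, hf⟩ := h
  exact ⟨K, hK.trans hGH, f, hf⟩

theorem hasSection_map_subtype {K : Subgroup A} (f : K →* S) {N : Subgroup K}
    (h : N.map f = ⊤) : HasSection S (N.map K.subtype) := by
  refine ⟨_, le_rfl, f.comp (inclusion (map_subtype_le N)), fun s => ?_⟩
  obtain ⟨x, hx, rfl⟩ : s ∈ N.map f := h ▸ mem_top s
  exact ⟨⟨x, mem_map_of_mem _ hx⟩, rfl⟩

/-- A simple section of `G` is a section of the kernel or of the image of a homomorphism. -/
theorem HasSection.ker_or_map [IsSimpleGroup S] {G : Subgroup A} (h : HasSection S G)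
    (φ : A →* B) : HasSection S (G ⊓ φ.ker) ∨ HasSection S (G.map φ) := by
  obtain ⟨K, hK, f, hf⟩ := h
  have hn : ((φ.ker.subgroupOf K).map f).Normal := Normal.map inferInstance f hf
  rcases hn.eq_bot_or_eq_top with h0 | h1
  · right
    have hker : (φ.subgroupMap K).ker ≤ f.ker := by
      intro x hx
      have : f x ∈ (φ.ker.subgroupOf K).map f := by
        refine mem_map_of_mem _ ?_
        rw [mem_subgroupOf, MonoidHom.mem_ker]
        exact congrArg Subtype.val hx
      simpa [h0] using this
    let g := (φ.subgroupMap K).liftOfSurjective (φ.subgroupMap_surjective K) ⟨f, hker⟩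
    refine ⟨K.map φ, map_mono hK, g, fun s => ?_⟩
    obtain ⟨x, rfl⟩ := hf s
    exact ⟨φ.subgroupMap K x, MonoidHom.liftOfRightInverse_comp_apply _ _ _ ⟨f, hker⟩ x⟩
  · left
    refine (hasSection_map_subtype f h1).mono ?_
    rw [subgroupOf_map_subtype]
    exact le_inf (inf_le_right.trans hK) inf_le_left

theorem HasSection.commutator [IsSimpleGroup S] (hS : ∃ a b : S, a * b ≠ b * a)
    {G : Subgroup A} (h : HasSection S G) : HasSection S ⁅G, G⁆ := by
  obtain ⟨K, hK, f, hf⟩ := h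
  have hn : ((_root_.commutator K).map f).Normal := Normal.map inferInstance f hf
  have h1 : (_root_.commutator K).map f = ⊤ := by
    refine hn.eq_bot_or_eq_top.resolve_left fun h0 => ?_
    obtain ⟨a, b, hab⟩ := hS
    obtain ⟨x, rfl⟩ := hf a
    obtain ⟨y, rfl⟩ := hf b
    have : f ⁅x, y⁆ ∈ (_root_.commutator K).map f :=
      mem_map_of_mem _ (commutator_mem_commutator (mem_top x) (mem_top y))
    rw [h0, mem_bot, map_commutatorElement, commutatorElement_eq_one_iff_mul_comm] at this
    exact hab this
  refine (hasSection_map_subtype f h1).mono ?_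
  rw [_root_.commutator_def, map_commutator, ← MonoidHom.range_eq_map, range_subtype]
  exact commutator_mono hK hK

theorem not_hasSection_of_comm (hS : ∃ a b : S, a * b ≠ b * a) {G : Subgroup A}
    (hG : ∀ x ∈ G, ∀ y ∈ G, x * y = y * x) : ¬ HasSection S G := by
  rintro ⟨K, hK, f, hf⟩
  obtain ⟨a, b, hab⟩ := hS
  obtain ⟨x, rfl⟩ := hf a
  obtain ⟨y, rfl⟩ := hf b
  have hxy : x * y = y * x := Subtype.ext (hG x (hK x.2) y (hK y.2))
  exact hab (by rw [← map_mul, ← map_mul, hxy])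

theorem HasSection.inf_ker [IsSimpleGroup S] (hS : ∃ a b : S, a * b ≠ b * a)
    {C : Type*} [CommGroup C] {G : Subgroup A} (h : HasSection S G) (φ : A →* C) :
    HasSection S (G ⊓ φ.ker) :=
  (h.ker_or_map φ).resolve_right (not_hasSection_of_comm hS fun x _ y _ => mul_comm x y)

theorem HasSection.comap {φ : A →* B} {H : Subgroup B} (h : HasSection S H)
    (hH : H ≤ φ.range) : HasSection S (H.comap φ) := by
  obtain ⟨K, hK, f, hf⟩ := h
  refine ⟨K.comap φ, comap_mono hK, f.comp (φ.subgroupComap K), fun s => ?_⟩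
  obtain ⟨y, rfl⟩ := hf s
  obtain ⟨x, hx⟩ := hH (hK y.2)
  exact ⟨⟨x, by rw [mem_comap, hx]; exact y.2⟩, congrArg f (Subtype.ext hx)⟩

end Sections

section Sections

variable {S A B : Type*} [Group S] [Group A] [Group B]

theorem HasSection.map_of_injective {G : Subgroup A} (h : HasSection S G) {φ : A →* B}
    (hφ : Function.Injective φ) : HasSection S (G.map φ) := by
  obtain ⟨K, hK, f, hf⟩ := h
  exact ⟨K.map φ, map_mono hK, f.comp (K.equivMapOfInjective φ hφ).symm.toMonoidHom,
    hf.comp (K.equivMapOfInjective φ hφ).symm.surjective⟩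

theorem memOcc_iff {A S : Type} [Group A] [Group S] {G : Subgroup A} :
    MemOcc G S ↔ IsSimpleGroup S ∧ (∃ a b : S, a * b ≠ b * a) ∧ HasSection S G := by
  refine and_congr_right fun _ => and_congr_right fun _ => ⟨?_, fun h => ?_⟩
  · rintro ⟨K, f, hf⟩
    have h : HasSection S K := ⟨K, le_rfl, f, hf⟩
    exact (h.map_of_injective G.subtype_injective).mono (map_subtype_le K)
  · obtain ⟨K, -, f, hf⟩ := h.comap (φ := G.subtype) (by simp)
    exact ⟨K, f, hf⟩

end Sections

section Elementary

variable {R : Type*} [CommRing R]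

theorem sl2_ext {g h : SpecialLinearGroup (Fin 2) R}
    (hgh : (g : Matrix (Fin 2) (Fin 2) R) = (h : Matrix (Fin 2) (Fin 2) R)) : g = h :=
  Subtype.ext hgh

theorem sl2_det_eq (g : SpecialLinearGroup (Fin 2) R) :
    g 0 0 * g 1 1 - g 0 1 * g 1 0 = 1 := by
  rw [← det_fin_two]; exact g.2

/-- The upper elementary matrix. -/
def upperE (x : R) : SpecialLinearGroup (Fin 2) R := ⟨!![1, x; 0, 1], by simp⟩

/-- The lower elementary matrix. -/
def lowerE (x : R) : SpecialLinearGroup (Fin 2) R := ⟨!![1, 0; x, 1], by simp⟩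

theorem upperE_coe (x : R) : (upperE x : Matrix (Fin 2) (Fin 2) R) = !![1, x; 0, 1] := rfl

theorem lowerE_coe (x : R) : (lowerE x : Matrix (Fin 2) (Fin 2) R) = !![1, 0; x, 1] := rfl

theorem upperE_add (x y : R) : upperE (x + y) = upperE x * upperE y := by
  ext i j
  fin_cases i <;> fin_cases j <;> simp [upperE_coe, add_comm]

theorem lowerE_add (x y : R) : lowerE (x + y) = lowerE x * lowerE y := by
  ext i j
  fin_cases i <;> fin_cases j <;> simp [lowerE_coe]

/-- The upper elementary matrices form a copy of the additive group of the ring. -/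
def upperEHom : Multiplicative R →* SpecialLinearGroup (Fin 2) R :=
  MonoidHom.mk' (fun x => upperE x.toAdd) fun _ _ => upperE_add _ _

/-- The lower elementary matrices form a copy of the additive group of the ring. -/
def lowerEHom : Multiplicative R →* SpecialLinearGroup (Fin 2) R :=
  MonoidHom.mk' (fun x => lowerE x.toAdd) fun _ _ => lowerE_add _ _

theorem upperE_zero : upperE (0 : R) = 1 := upperEHom.map_one

theorem lowerE_zero : lowerE (0 : R) = 1 := lowerEHom.map_one

theorem upperE_pow (x : R) (n : ℕ) : upperE x ^ n = upperE (n * x) := by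
  rw [← nsmul_eq_mul]
  exact (map_pow upperEHom (Multiplicative.ofAdd x) n).symm

theorem map_upperE {T : Type*} [CommRing T] (f : R →+* T) (x : R) :
    SpecialLinearGroup.map f (upperE x) = upperE (f x) := by
  ext i j
  fin_cases i <;> fin_cases j <;> simp [upperE_coe]

theorem map_lowerE {T : Type*} [CommRing T] (f : R →+* T) (x : R) :
    SpecialLinearGroup.map f (lowerE x) = lowerE (f x) := by
  ext i j
  fin_cases i <;> fin_cases j <;> simp [lowerE_coe]

theorem mem_of_elementary_of_isUnit {H : Subgroup (SpecialLinearGroup (Fin 2) R)}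
    (hU : ∀ x, upperE x ∈ H) (hL : ∀ x, lowerE x ∈ H) (g : SpecialLinearGroup (Fin 2) R)
    (hg : IsUnit (g 0 0)) : g ∈ H := by
  obtain ⟨u, hu⟩ := hg
  have hdet : g 0 0 * g 1 1 - g 0 1 * g 1 0 = 1 := sl2_det_eq g
  have key : g = lowerE (g 1 0 * ↑u⁻¹) * (upperE (u : R) * lowerE (-(↑u⁻¹ : R)) * upperE (u : R) *
      (upperE (-1) * lowerE 1 * upperE (-1))) * upperE (↑u⁻¹ * g 0 1) := by
    rw [← hu] at hdet
    have h1 : (u : R) * ↑u⁻¹ = 1 := u.mul_inv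
    ext i j
    fin_cases i <;> fin_cases j <;>
      simp [upperE_coe, lowerE_coe, Matrix.mul_apply, Fin.sum_univ_two, ← hu]
    grind
  rw [key]
  exact mul_mem (mul_mem (hL _) (mul_mem (mul_mem (mul_mem (hU _) (hL _)) (hU _))
    (mul_mem (mul_mem (hU _) (hL _)) (hU _)))) (hU _)

end Elementary

theorem ZMod.exists_isUnit_add_mul {m : ℕ} [NeZero m] {a c : ZMod m} (h : IsCoprime a c) :
    ∃ t, IsUnit (a + t * c) := by
  have hgm : Nat.gcd c.val m ∣ m := Nat.gcd_dvd_right _ _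
  set g := Nat.gcd c.val m with hg
  have hc : (ZMod.castHom hgm (ZMod g)) c = 0 := by
    rw [← ZMod.natCast_zmod_val c, map_natCast, ZMod.natCast_eq_zero_iff]
    exact Nat.gcd_dvd_left _ _
  obtain ⟨x, y, hxy⟩ := h
  have ha : IsUnit (ZMod.castHom hgm (ZMod g) a) := by
    have := congrArg (ZMod.castHom hgm (ZMod g)) hxy
    rw [map_add, map_mul, map_mul, hc, mul_zero, add_zero, map_one, mul_comm] at this
    exact IsUnit.of_mul_eq_one _ this
  obtain ⟨v, hv⟩ := ha
  obtain ⟨u, rfl⟩ := ZMod.unitsMap_surjective hgm v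
  have hu : ZMod.castHom hgm (ZMod g) (u - a) = 0 := by
    rw [map_sub, ← hv, sub_eq_zero]
    rfl
  rw [← ZMod.natCast_zmod_val ((u : ZMod m) - a), map_natCast, ZMod.natCast_eq_zero_iff] at hu
  obtain ⟨s, hs⟩ := hu
  have hgc : (g : ZMod m) = c * (Nat.gcdA c.val m : ZMod m) := by
    have := congrArg (Int.cast : ℤ → ZMod m) (Nat.gcd_eq_gcd_ab c.val m)
    simpa [← hg] using this
  refine ⟨Nat.gcdA c.val m * s, ?_⟩
  have : a + Nat.gcdA c.val m * s * c = u := by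
    have h2 : (u : ZMod m) - a = g * s := by
      rw [← ZMod.natCast_zmod_val ((u : ZMod m) - a), hs, Nat.cast_mul]
    rw [hgc] at h2
    linear_combination -h2
  rw [this]
  exact u.isUnit

theorem eq_top_of_elementary_mem {m : ℕ} [NeZero m]
    {H : Subgroup (SpecialLinearGroup (Fin 2) (ZMod m))}
    (hU : ∀ x, upperE x ∈ H) (hL : ∀ x, lowerE x ∈ H) : H = ⊤ := by
  refine eq_top_iff.mpr fun g _ => ?_
  obtain ⟨t, ht⟩ := ZMod.exists_isUnit_add_mul (g.isCoprime_col 0)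
  rw [← H.mul_mem_cancel_left (hU t)]
  refine mem_of_elementary_of_isUnit hU hL _ ?_
  simpa [upperE_coe, Matrix.mul_apply, Fin.sum_univ_two] using ht

theorem slMap_castHom_surjective {m n : ℕ} [NeZero n] (h : n ∣ m) :
    Function.Surjective (SpecialLinearGroup.map (n := Fin 2) (ZMod.castHom h (ZMod n))) := by
  rw [← MonoidHom.range_eq_top]
  refine eq_top_of_elementary_mem (fun x => ?_) (fun x => ?_) <;>
    obtain ⟨y, rfl⟩ := ZMod.castHom_surjective h x
  · exact ⟨upperE y, map_upperE _ _⟩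
  · exact ⟨lowerE y, map_lowerE _ _⟩

section PGroupsInSL2

theorem cross_eq_zero {F : Type*} [Field F] {a b c d e f x y z : F}
    (hw : ¬ (x = 0 ∧ y = 0 ∧ z = 0))
    (h1 : a * y = b * x) (h2 : b * z = c * y) (h3 : a * z = c * x)
    (k1 : d * y = e * x) (k2 : e * z = f * y) (k3 : d * z = f * x) :
    a * e = b * d ∧ b * f = c * e ∧ a * f = c * d := by
  by_cases hx : x = 0
  · by_cases hy : y = 0
    · have hz : z ≠ 0 := fun h => hw ⟨hx, hy, h⟩
      subst hx hy
      simp_all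
    · refine ⟨?_, ?_, ?_⟩ <;> apply mul_left_cancel₀ hy <;> grind
  · refine ⟨?_, ?_, ?_⟩ <;> apply mul_left_cancel₀ hx <;> grind

variable {F : Type*} [Field F]

theorem sl2_commute_iff {g h : SpecialLinearGroup (Fin 2) F} :
    g * h = h * g ↔ g 0 1 * h 1 0 = g 1 0 * h 0 1 ∧
      g 1 0 * (h 0 0 - h 1 1) = (g 0 0 - g 1 1) * h 1 0 ∧
      g 0 1 * (h 0 0 - h 1 1) = (g 0 0 - g 1 1) * h 0 1 := by
  rw [Matrix.SpecialLinearGroup.ext_iff (g * h)]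
  simp only [Fin.forall_fin_two, Matrix.SpecialLinearGroup.coe_mul, Matrix.mul_apply,
    Fin.sum_univ_two]
  constructor
  · rintro ⟨⟨h1, h2⟩, h3, h4⟩
    refine ⟨?_, ?_, ?_⟩
    · linear_combination h1
    · linear_combination h3
    · linear_combination -h2
  · rintro ⟨h1, h2, h3⟩
    refine ⟨⟨?_, ?_⟩, ?_, ?_⟩
    · linear_combination h1
    · linear_combination -h3
    · linear_combination h2
    · linear_combination -h1

theorem nonscalar_of_notMem_center {z : SpecialLinearGroup (Fin 2) F}
    (hz : z ∉ center (SpecialLinearGroup (Fin 2) F)) :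
    ¬ (z 0 1 = 0 ∧ z 1 0 = 0 ∧ z 0 0 - z 1 1 = 0) := by
  rintro ⟨h1, h2, h3⟩
  refine hz (mem_center_iff.mpr fun w => ?_)
  rw [sl2_commute_iff, h1, h2, h3]
  simp

theorem commute_of_commute_nonscalar {z g h : SpecialLinearGroup (Fin 2) F}
    (hz : z ∉ center (SpecialLinearGroup (Fin 2) F)) (hg : g * z = z * g) (hh : h * z = z * h) :
    g * h = h * g := by
  rw [sl2_commute_iff] at *
  exact cross_eq_zero (nonscalar_of_notMem_center hz) hg.1 hg.2.1 hg.2.2 hh.1 hh.2.1 hh.2.2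

theorem sq_eq_one_of_mem_center {z : SpecialLinearGroup (Fin 2) F}
    (hz : z ∈ center (SpecialLinearGroup (Fin 2) F)) : z ^ 2 = 1 := by
  obtain ⟨r, hr, hrz⟩ := Matrix.SpecialLinearGroup.mem_center_iff.mp hz
  rw [Fintype.card_fin] at hr
  apply sl2_ext
  rw [Matrix.SpecialLinearGroup.coe_pow, ← hrz, ← map_pow, hr, map_one,
    Matrix.SpecialLinearGroup.coe_one]

theorem eq_one_of_pow_of_pow {A : Type*} [Group A] {x : A} {a b : ℕ} (ha : x ^ a = 1)
    (hb : x ^ b = 1) (hab : a.Coprime b) : x = 1 :=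
  orderOf_eq_one_iff.mp (Nat.eq_one_of_dvd_coprimes hab (orderOf_dvd_of_pow_eq_one ha)
    (orderOf_dvd_of_pow_eq_one hb))

/-- A subgroup of `SL₂(F)` of odd prime power order is commutative. -/
theorem comm_of_isPGroup_of_odd {ℓ : ℕ} [Fact ℓ.Prime] (hℓ : Odd ℓ)
    {P : Subgroup (SpecialLinearGroup (Fin 2) F)} [Finite P] (hP : IsPGroup ℓ P)
    {g h : SpecialLinearGroup (Fin 2) F} (hg : g ∈ P) (hh : h ∈ P) : g * h = h * g := by
  rcases subsingleton_or_nontrivial P with h1 | h1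
  · exact congrArg Subtype.val (Subsingleton.elim ((⟨g, hg⟩ : P) * ⟨h, hh⟩) (⟨h, hh⟩ * ⟨g, hg⟩))
  have := hP.center_nontrivial
  obtain ⟨⟨z, hz⟩, hz1⟩ := exists_ne (1 : center P)
  have hcomm {x} (hx : x ∈ P) : x * z = z * x :=
    congrArg Subtype.val (mem_center_iff.mp hz ⟨x, hx⟩)
  refine commute_of_commute_nonscalar (z := z) (fun hc => hz1 ?_) (hcomm hg) (hcomm hh)
  obtain ⟨k, hk⟩ := hP z
  apply Subtype.ext
  apply Subtype.ext
  exact eq_one_of_pow_of_pow (sq_eq_one_of_mem_center hc) (congrArg Subtype.val hk)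
    (Nat.coprime_two_left.mpr hℓ.pow)

theorem pow_two_mul_char_eq_one {p : ℕ} [CharP F p] (hp : p.Prime)
    {g : SpecialLinearGroup (Fin 2) F} (hg : (g 0 0 + g 1 1) ^ 2 = 4) : g ^ (2 * p) = 1 := by
  have : Fact p.Prime := ⟨hp⟩
  have hdet := sl2_det_eq g
  have h0 : ((g : Matrix (Fin 2) (Fin 2) F) ^ 2 - 1) ^ 2 = 0 := by
    ext i j
    fin_cases i <;> fin_cases j <;>
      simp only [pow_two, Matrix.mul_apply, Fin.sum_univ_two, Fin.mk_one, Fin.zero_eta,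
        Matrix.sub_apply, Matrix.one_apply_eq, Matrix.zero_apply, ne_eq, zero_ne_one, one_ne_zero,
        not_false_eq_true, Matrix.one_apply_ne] <;> grind
  apply sl2_ext
  rw [Matrix.SpecialLinearGroup.coe_pow, pow_mul, Matrix.SpecialLinearGroup.coe_one, ← sub_eq_zero]
  have h1 := sub_pow_char_of_commute (p := p)
    (Commute.one_right ((g : Matrix (Fin 2) (Fin 2) F) ^ 2))
  rw [one_pow] at h1
  rw [← h1, ← Nat.sub_add_cancel hp.two_le, pow_add, h0, mul_zero]

theorem eq_or_eq_inv_of_commute (h2 : (2 : F) ≠ 0) {g h : SpecialLinearGroup (Fin 2) F}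
    (hgh : g * h = h * g) (htr : g 0 0 + g 1 1 = h 0 0 + h 1 1)
    (hg : (g 0 0 + g 1 1) ^ 2 ≠ 4) : h = g ∨ h = g⁻¹ := by
  have dg := sl2_det_eq g
  have dh := sl2_det_eq h
  obtain ⟨e1, e2, e3⟩ := sl2_commute_iff.mp hgh
  obtain ⟨β, k1, k2, k3⟩ : ∃ β, h 0 1 = β * g 0 1 ∧ h 1 0 = β * g 1 0 ∧
      h 0 0 - h 1 1 = β * (g 0 0 - g 1 1) := by
    by_cases x1 : g 0 1 = 0
    · by_cases x2 : g 1 0 = 0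
      · have x3 : g 0 0 - g 1 1 ≠ 0 := fun h3 => hg (by grind)
        refine ⟨(h 0 0 - h 1 1) / (g 0 0 - g 1 1), ?_, ?_, ?_⟩ <;> field_simp <;> grind
      · refine ⟨h 1 0 / g 1 0, ?_, ?_, ?_⟩ <;> field_simp <;> grind
    · refine ⟨h 0 1 / g 0 1, ?_, ?_, ?_⟩ <;> field_simp <;> grind
  have hβ : (β - 1) * (β + 1) = 0 := by
    have : (β - 1) * (β + 1) * ((g 0 0 + g 1 1) ^ 2 - 4) = 0 := by grind
    exact (mul_eq_zero.mp this).resolve_right (sub_ne_zero.mpr hg)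
  rcases mul_eq_zero.mp hβ with hβ | hβ
  · left
    ext i j
    fin_cases i <;> fin_cases j <;> simp only [Fin.mk_one, Fin.zero_eta] <;> grind
  · right
    ext i j
    rw [Matrix.SpecialLinearGroup.coe_inv, adjugate_fin_two]
    fin_cases i <;> fin_cases j <;> simp <;> grind

theorem sq_commute_of_conj {p ℓ k : ℕ} [CharP F p] (hp : p.Prime) (hp2 : p ≠ 2)
    (hℓ : Odd ℓ) (hpℓ : p.Coprime ℓ) {g n : SpecialLinearGroup (Fin 2) F}
    (hg : g ^ ℓ ^ k = 1) (hgn : g * (n * g * n⁻¹) = n * g * n⁻¹ * g) :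
    n ^ 2 * g = g * n ^ 2 := by
  have h2 : (2 : F) ≠ 0 := Ring.two_ne_zero (by rwa [ringChar.eq F p])
  by_cases htr : (g 0 0 + g 1 1) ^ 2 = 4
  · have : g = 1 := eq_one_of_pow_of_pow (pow_two_mul_char_eq_one hp htr) hg
      (Nat.Coprime.mul_left (Nat.coprime_two_left.mpr hℓ.pow) (hpℓ.pow_right k))
    rw [this, mul_one, one_mul]
  have htr' : g 0 0 + g 1 1 = (n * g * n⁻¹) 0 0 + (n * g * n⁻¹) 1 1 := by
    rw [← trace_fin_two, ← trace_fin_two, Matrix.SpecialLinearGroup.coe_mul, trace_mul_comm,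
      ← Matrix.SpecialLinearGroup.coe_mul, inv_mul_cancel_left]
  rcases eq_or_eq_inv_of_commute h2 hgn htr' htr with h | h
  · rw [mul_inv_eq_iff_eq_mul] at h
    rw [pow_two, mul_assoc, h, ← mul_assoc, h, mul_assoc]
  · have h' : n * g⁻¹ * n⁻¹ = g := by rw [← conj_inv, h, inv_inv]
    rw [mul_inv_eq_iff_eq_mul] at h'
    rw [mul_inv_eq_iff_eq_mul] at h
    rw [pow_two, mul_assoc, h, ← mul_assoc, h', mul_assoc]
end PGroupsInSL2

/-- Frattini's argument, for the preimage of a normal `ℓ`-subgroup. -/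
theorem exists_normalizing_of_surjective {Γ T : Type*} [Group Γ] [Finite Γ] [Group T] {ℓ : ℕ}
    [Fact ℓ.Prime] {f : Γ →* T} (hf : Function.Surjective f) (U : Subgroup T) [U.Normal]
    (hU : IsPGroup ℓ U) (t : T) :
    ∃ P : Subgroup Γ, IsPGroup ℓ P ∧ (∀ u ∈ U, ∃ g ∈ P, f g = u) ∧
      ∃ n, (∀ g ∈ P, n * g * n⁻¹ ∈ P) ∧ ∃ u ∈ U, f n = t * u := by
  obtain ⟨P⟩ : Nonempty (Sylow ℓ (U.comap f)) := inferInstance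
  refine ⟨P.map (U.comap f).subtype, P.2.map _, fun u hu => ?_, ?_⟩
  · have hs : Function.Surjective (f.subgroupComap U) := by
      rintro ⟨v, hv⟩
      obtain ⟨x, rfl⟩ := hf v
      exact ⟨⟨x, hv⟩, rfl⟩
    have htop : (⊤ : Subgroup U) = P.map (f.subgroupComap U) :=
      (P.mapSurjective hs).is_maximal' (hU.to_subgroup ⊤) le_top
    obtain ⟨x, hx, hxu⟩ : (⟨u, hu⟩ : U) ∈ P.map (f.subgroupComap U) := htop ▸ mem_top _
    exact ⟨x, mem_map_of_mem _ hx, congrArg Subtype.val hxu⟩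
  · obtain ⟨γ, rfl⟩ := hf t
    have hγ : γ ∈ normalizer (P.map (U.comap f).subtype : Set Γ) ⊔ U.comap f :=
      P.normalizer_sup_eq_top ▸ mem_top γ
    obtain ⟨n, hn, x, hx, rfl⟩ := mem_sup_of_normal_right.mp hγ
    exact ⟨n, fun g hg => (mem_normalizer_iff.mp hn g).mp hg, (f x)⁻¹, inv_mem hx, by simp⟩

theorem upperE_mem_center_iff {R : Type*} [Field R] {x : R} :
    upperE x ∈ center (SpecialLinearGroup (Fin 2) R) ↔ x = 0 := by
  refine ⟨fun h => ?_, fun h => h ▸ upperE_zero (R := R) ▸ one_mem _⟩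
  have := (sl2_commute_iff.mp (mem_center_iff.mp h (lowerE 1))).1
  simpa [upperE_coe, lowerE_coe, eq_comm] using this

section PSL2

variable {ℓ : ℕ} [Fact ℓ.Prime]

/-- The images of the upper elementary matrices in `PSL₂`. -/
def psl2Upper (ℓ : ℕ) : Multiplicative (ZMod ℓ) →* PSL2 ℓ :=
  (QuotientGroup.mk' _).comp upperEHom

theorem psl2Upper_injective : Function.Injective (psl2Upper ℓ) := by
  refine (injective_iff_map_eq_one _).mpr fun x hx => ?_
  exact upperE_mem_center_iff.mp ((QuotientGroup.eq_one_iff _).mp hx)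

theorem exists_diag_conj_upperE {R : Type*} [Field R] (h2 : (2 : R) ≠ 0) :
    ∃ t : SpecialLinearGroup (Fin 2) R, ∀ x, t * upperE x = upperE (4 * x) * t := by
  refine ⟨⟨!![2, 0; 0, 2⁻¹], by simp [h2]⟩, fun x => ?_⟩
  apply Subtype.ext
  change !![2, 0; 0, 2⁻¹] * !![1, x; 0, 1] = !![1, 4 * x; 0, 1] * !![2, 0; 0, 2⁻¹]
  have : 2 * x = 4 * x * 2⁻¹ := by field_simp; ring
  simp [this]

theorem two_ne_zero_of_coprime (hℓ : ℓ.Coprime 30) : (2 : ZMod ℓ) ≠ 0 := by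
  intro h
  have : ℓ ∣ 2 := (ZMod.natCast_eq_zero_iff 2 ℓ).mp (by exact_mod_cast h)
  exact (Fact.out : ℓ.Prime).one_lt.ne' (Nat.eq_one_of_dvd_coprimes hℓ dvd_rfl
    (this.trans (by norm_num)))

theorem fifteen_ne_zero_of_coprime (hℓ : ℓ.Coprime 30) : (15 : ZMod ℓ) ≠ 0 := by
  intro h
  have : ℓ ∣ 15 := (ZMod.natCast_eq_zero_iff 15 ℓ).mp (by exact_mod_cast h)
  exact (Fact.out : ℓ.Prime).one_lt.ne' (Nat.eq_one_of_dvd_coprimes hℓ dvd_rfl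
    (this.trans (by norm_num)))

theorem exists_psl2_conj (hℓ : ℓ.Coprime 30) :
    ∃ t : PSL2 ℓ, ∀ x, t * psl2Upper ℓ (.ofAdd x) = psl2Upper ℓ (.ofAdd (4 * x)) * t := by
  obtain ⟨t, ht⟩ := exists_diag_conj_upperE (two_ne_zero_of_coprime hℓ)
  exact ⟨QuotientGroup.mk' _ t, fun x => congrArg (QuotientGroup.mk' _) (ht x)⟩

theorem psl2_not_comm (hℓ : ℓ.Coprime 30) : ∃ a b : PSL2 ℓ, a * b ≠ b * a := by
  obtain ⟨t, ht⟩ := exists_psl2_conj hℓ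
  refine ⟨t, psl2Upper ℓ (.ofAdd 1), fun h => fifteen_ne_zero_of_coprime hℓ ?_⟩
  have h1 : (4 * 1 : ZMod ℓ) = 1 := psl2Upper_injective (mul_right_cancel ((ht 1).symm.trans h))
  linear_combination 5 * h1

theorem psl2_isSimpleGroup (hℓ : ℓ.Coprime 30) : IsSimpleGroup (PSL2 ℓ) :=
  Matrix.ProjectiveSpecialLinearGroup.rank_two_simple' ⟨2, two_ne_zero_of_coprime hℓ, fun h =>
    fifteen_ne_zero_of_coprime hℓ (by linear_combination 5 * h)⟩

theorem not_hasSection_sl2_of_ne {p : ℕ} [Fact p.Prime] (hp2 : p ≠ 2) (hℓ : ℓ.Coprime 30)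
    (hpℓ : p ≠ ℓ) (H : Subgroup (SpecialLinearGroup (Fin 2) (ZMod p))) :
    ¬ HasSection (PSL2 ℓ) H := by
  rintro ⟨K, -, f, hf⟩
  have hodd : Odd ℓ := (Nat.coprime_two_right.mp (hℓ.coprime_dvd_right (by norm_num)))
  obtain ⟨t, ht⟩ := exists_psl2_conj hℓ
  have hU : IsPGroup ℓ (psl2Upper ℓ).range := by
    rintro ⟨_, x, rfl⟩
    refine ⟨1, Subtype.ext ?_⟩
    change psl2Upper ℓ x ^ ℓ ^ 1 = 1
    have hx : x ^ ℓ = 1 := by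
      change ℓ • x.toAdd = 0
      rw [nsmul_eq_mul, CharP.cast_eq_zero, zero_mul]
    rw [pow_one, ← map_pow, hx, map_one]
  have htU : t ∈ normalizer ((psl2Upper ℓ).range : Set (PSL2 ℓ)) := by
    rw [mem_normalizer_iff]
    refine fun h => ⟨?_, ?_⟩
    · rintro ⟨x, rfl⟩
      exact ⟨_, eq_mul_inv_of_mul_eq (ht x.toAdd).symm⟩
    · rintro ⟨y, hy⟩
      have h4 : 4 * (y.toAdd / 4) = y.toAdd := mul_div_cancel₀ _ <| by
        rw [show (4 : ZMod ℓ) = 2 * 2 by norm_num]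
        exact mul_ne_zero (two_ne_zero_of_coprime hℓ) (two_ne_zero_of_coprime hℓ)
      refine ⟨.ofAdd (y.toAdd / 4), ?_⟩
      have := ht (y.toAdd / 4)
      rw [h4, ofAdd_toAdd, hy, inv_mul_cancel_right] at this
      exact mul_left_cancel this
  set T := normalizer ((psl2Upper ℓ).range : Set (PSL2 ℓ))
  have hs : Function.Surjective (f.subgroupComap T) := by
    rintro ⟨v, hv⟩
    obtain ⟨x, rfl⟩ := hf v
    exact ⟨⟨x, hv⟩, rfl⟩
  have : ((psl2Upper ℓ).range.subgroupOf T).Normal := normal_in_normalizer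
  obtain ⟨P, hP, hPU, n, hn, u, ⟨y, hy⟩, hfn⟩ := exists_normalizing_of_surjective hs
    ((psl2Upper ℓ).range.subgroupOf T) (hU.comap_subtype) ⟨t, htU⟩
  have h1 : psl2Upper ℓ (.ofAdd 1) ∈ T := le_normalizer ⟨_, rfl⟩
  obtain ⟨g, hg, hgu⟩ := hPU ⟨_, h1⟩ ⟨_, rfl⟩
  let ι : T.comap f →* SpecialLinearGroup (Fin 2) (ZMod p) := K.subtype.comp (T.comap f).subtype
  have hι : Function.Injective ι := K.subtype_injective.comp (T.comap f).subtype_injective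
  obtain ⟨k, hk⟩ := hP ⟨g, hg⟩
  have hcomm : n ^ 2 * g = g * n ^ 2 := by
    apply hι
    rw [map_mul, map_mul, map_pow]
    refine sq_commute_of_conj (p := p) (ℓ := ℓ) (k := k) Fact.out hp2 hodd
      ((Nat.coprime_primes Fact.out Fact.out).mpr hpℓ) ?_ ?_
    · rw [← map_pow, show g ^ ℓ ^ k = 1 from congrArg Subtype.val hk, map_one]
    · rw [← map_inv, ← map_mul, ← map_mul]
      exact comm_of_isPGroup_of_odd hodd (hP.map ι) (mem_map_of_mem _ hg)
        (mem_map_of_mem _ (hn g hg))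
  have hfn' : f n = t * psl2Upper ℓ y := by
    rw [hy]; exact congrArg Subtype.val hfn
  have hfg : f g = psl2Upper ℓ (.ofAdd 1) := congrArg Subtype.val hgu
  have h := congrArg (fun x => f x.1) hcomm
  simp only [Subgroup.coe_mul, Subgroup.coe_pow, map_mul, map_pow, hfn', hfg] at h
  have hx (z : ZMod ℓ) : t * psl2Upper ℓ y * psl2Upper ℓ (.ofAdd z) =
      psl2Upper ℓ (.ofAdd (4 * z)) * (t * psl2Upper ℓ y) := by
    rw [mul_assoc, ← map_mul, mul_comm y, map_mul, ← mul_assoc, ht, mul_assoc]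
  rw [pow_two, mul_assoc, hx, ← mul_assoc, hx, mul_assoc] at h
  have h16 : (4 * (4 * 1) : ZMod ℓ) = 1 := psl2Upper_injective (mul_right_cancel h)
  exact fifteen_ne_zero_of_coprime hℓ (by linear_combination h16)

end PSL2

/-- Reduction of invertible matrices modulo a divisor. -/
abbrev redGL {m n : ℕ} (h : n ∣ m) : GL (Fin 2) (ZMod m) →* GL (Fin 2) (ZMod n) :=
  GeneralLinearGroup.map (ZMod.castHom h (ZMod n))

theorem redGL_comp_redGL {m n k : ℕ} (h : n ∣ m) (h' : k ∣ n) :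
    (redGL h').comp (redGL h) = redGL (h'.trans h) := by
  ext g i j
  exact RingHom.congr_fun (Subsingleton.elim ((ZMod.castHom h' (ZMod k)).comp
    (ZMod.castHom h (ZMod n))) (ZMod.castHom (h'.trans h) (ZMod k))) _

theorem mul_eq_zero_of_castHom_eq_zero {p n : ℕ} {a b : ZMod (p * n)}
    (ha : ZMod.castHom (dvd_mul_right p n) (ZMod p) a = 0)
    (hb : ZMod.castHom (dvd_mul_left n p) (ZMod n) b = 0) : a * b = 0 := by
  obtain ⟨a, rfl⟩ := ZMod.intCast_surjective a
  obtain ⟨b, rfl⟩ := ZMod.intCast_surjective b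
  rw [map_intCast, ZMod.intCast_zmod_eq_zero_iff_dvd] at ha hb
  rw [← Int.cast_mul, ZMod.intCast_zmod_eq_zero_iff_dvd]
  exact_mod_cast mul_dvd_mul ha hb

theorem castHom_sub_one_eq_zero {m n : ℕ} (h : n ∣ m) {g : GL (Fin 2) (ZMod m)}
    (hg : g ∈ (redGL h).ker) (i j : Fin 2) :
    ZMod.castHom h (ZMod n) ((g.1 - 1) i j) = 0 := by
  have := congrArg (fun x : GL (Fin 2) (ZMod n) => x.1 i j) (MonoidHom.mem_ker.mp hg)
  simp only [redGL, GeneralLinearGroup.map_apply, Units.val_one] at this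
  rw [Matrix.sub_apply, map_sub, this, Matrix.one_apply, Matrix.one_apply]
  split_ifs <;> simp [-ZMod.castHom_apply]

theorem mul_comm_of_mem_ker {p n : ℕ} {x y : GL (Fin 2) (ZMod (p * n))}
    (hxp : x ∈ (redGL (dvd_mul_right p n)).ker) (hyp : y ∈ (redGL (dvd_mul_right p n)).ker)
    (hxn : x ∈ (redGL (dvd_mul_left n p)).ker) (hyn : y ∈ (redGL (dvd_mul_left n p)).ker) :
    x * y = y * x := by
  have key : ∀ {x y : GL (Fin 2) (ZMod (p * n))}, x ∈ (redGL (dvd_mul_right p n)).ker →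
      y ∈ (redGL (dvd_mul_left n p)).ker → (x.1 - 1) * (y.1 - 1) = 0 := by
    intro x y hx hy
    ext i j
    rw [Matrix.mul_apply]
    exact Finset.sum_eq_zero fun k _ => mul_eq_zero_of_castHom_eq_zero
      (castHom_sub_one_eq_zero _ hx i k) (castHom_sub_one_eq_zero _ hy k j)
  have h1 := key hxp hyn
  have h2 := key hyp hxn
  apply Units.ext
  rw [Units.val_mul, Units.val_mul, ← sub_eq_zero, ← sub_eq_zero.mpr (h1.trans h2.symm)]
  noncomm_ring

theorem exists_prime_hasSection_map_redGL {S : Type} [Group S] [IsSimpleGroup S]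
    (hS : ∃ a b : S, a * b ≠ b * a) {m : ℕ} (hm : m ≠ 0) (G : Subgroup (GL (Fin 2) (ZMod m)))
    (hG : HasSection S G) :
    ∃ p, p.Prime ∧ ∃ h : p ∣ m, HasSection S (G.map (redGL h)) := by
  induction m using induction_on_primes with
  | zero => exact absurd rfl hm
  | one => exact absurd hG (not_hasSection_of_comm hS fun x _ y _ => Subsingleton.elim _ _)
  | prime_mul p n hp ih =>
    rcases hG.ker_or_map (redGL (dvd_mul_left n p)) with h | h
    · refine ⟨p, hp, dvd_mul_right p n, ?_⟩
      rcases h.ker_or_map (redGL (dvd_mul_right p n)) with h | h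
      · refine absurd h (not_hasSection_of_comm hS ?_)
        rintro x ⟨⟨-, hxn⟩, hxp⟩ y ⟨⟨-, hyn⟩, hyp⟩
        exact mul_comm_of_mem_ker hxp hyp hxn hyn
      · exact h.mono (map_mono inf_le_left)
    · obtain ⟨q, hq, hqn, h⟩ := ih (right_ne_zero_of_mul hm) _ h
      rw [Subgroup.map_map, redGL_comp_redGL] at h
      exact ⟨q, hq, _, h⟩

theorem HasSection.comap_toGL {S : Type*} [Group S] [IsSimpleGroup S]
    (hS : ∃ a b : S, a * b ≠ b * a) {R : Type*} [CommRing R] {G : Subgroup (GL (Fin 2) R)}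
    (h : HasSection S G) :
    HasSection S (G.comap
      (Matrix.SpecialLinearGroup.toGL : SpecialLinearGroup (Fin 2) R →* _)) := by
  have := (h.inf_ker hS GeneralLinearGroup.det).comap (φ := Matrix.SpecialLinearGroup.toGL) ?_
  · exact this.mono (comap_mono inf_le_left)
  · rintro g ⟨-, hg⟩
    exact ⟨⟨g.1, congrArg Units.val hg⟩, Units.ext rfl⟩

theorem not_hasSection_gl_of_ne {p ℓ : ℕ} [Fact p.Prime] [Fact ℓ.Prime] (hp2 : p ≠ 2)
    (hℓ : ℓ.Coprime 30) (hpℓ : p ≠ ℓ) (H : Subgroup (GL (Fin 2) (ZMod p))) :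
    ¬ HasSection (PSL2 ℓ) H := fun h =>
  have := psl2_isSimpleGroup hℓ
  not_hasSection_sl2_of_ne hp2 hℓ hpℓ _ (h.comap_toGL (psl2_not_comm hℓ))

theorem eq_upperE {R : Type*} [CommRing R] {h : SpecialLinearGroup (Fin 2) R} (h00 : h 0 0 = 1)
    (h10 : h 1 0 = 0) : h = upperE (h 0 1) := by
  have h11 : h 1 1 = 1 := by simpa [h00, h10] using sl2_det_eq h
  ext i j
  fin_cases i <;> fin_cases j <;> simp [upperE_coe, h00, h10, h11]

theorem exists_conj_eq_upperE {F : Type*} [Field F] {g : SpecialLinearGroup (Fin 2) F}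
    (hg : ((g : Matrix (Fin 2) (Fin 2) F) - 1).det = 0) :
    ∃ (δ : SpecialLinearGroup (Fin 2) F) (a : F), δ⁻¹ * g * δ = upperE a := by
  obtain ⟨v, hv0, hv⟩ := exists_mulVec_eq_zero_iff.mpr hg
  have hcop : IsCoprime (v 0) (v 1) := by
    by_cases h0 : v 0 = 0
    · have h1 : v 1 ≠ 0 := fun h1 => hv0 (by ext i; fin_cases i <;> simp [h0, h1])
      exact ⟨0, (v 1)⁻¹, by simp [h1]⟩
    · exact ⟨(v 0)⁻¹, 0, by simp [h0]⟩
  obtain ⟨δ, hδ0, hδ1⟩ := hcop.exists_SL2_col 0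
  have hδ : (δ : Matrix (Fin 2) (Fin 2) F) *ᵥ ![1, 0] = v := by
    ext i; fin_cases i <;> simp [mulVec, dotProduct, hδ0, hδ1]
  set h := δ⁻¹ * g * δ with hh
  have hfix : (h : Matrix (Fin 2) (Fin 2) F) *ᵥ ![1, 0] = ![1, 0] := by
    rw [hh, Matrix.SpecialLinearGroup.coe_mul, Matrix.SpecialLinearGroup.coe_mul,
      ← mulVec_mulVec, ← mulVec_mulVec, hδ]
    rw [sub_mulVec, one_mulVec, sub_eq_zero] at hv
    rw [hv, ← hδ, mulVec_mulVec, ← Matrix.SpecialLinearGroup.coe_mul, inv_mul_cancel,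
      Matrix.SpecialLinearGroup.coe_one, one_mulVec]
  have h00 : h 0 0 = 1 := by simpa [mulVec, dotProduct] using congrFun hfix 0
  have h10 : h 1 0 = 0 := by simpa [mulVec, dotProduct] using congrFun hfix 1
  exact ⟨δ, h 0 1, eq_upperE h00 h10⟩

theorem det_sub_one_eq_zero {F : Type*} [Field F] {ℓ : ℕ} [Fact ℓ.Prime] [CharP F ℓ]
    {g : SpecialLinearGroup (Fin 2) F} (hg : g ^ ℓ = 1) :
    ((g : Matrix (Fin 2) (Fin 2) F) - 1).det = 0 := by
  have h : ((g : Matrix (Fin 2) (Fin 2) F) - 1) ^ ℓ = 0 := by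
    rw [sub_pow_char_of_commute ℓ (Commute.one_right _), one_pow,
      ← Matrix.SpecialLinearGroup.coe_pow, hg, Matrix.SpecialLinearGroup.coe_one, sub_self]
  have hdet := congrArg det h
  rw [det_pow, det_zero] at hdet
  exact eq_zero_of_pow_eq_zero hdet

theorem commutator_le_range_upperEHom {F : Type*} [Field F]
    {H : Subgroup (SpecialLinearGroup (Fin 2) F)} (hH : ∀ h ∈ H, h 1 0 = 0) :
    ⁅H, H⁆ ≤ (upperEHom (R := F)).range := by
  refine commutator_le.mpr fun g hg h hh => ⟨.ofAdd (⁅g, h⁆ 0 1), ?_⟩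
  have hg0 := hH g hg
  have hh0 := hH h hh
  have h00 : ⁅g, h⁆ 0 0 = 1 := by
    have hgd : g 0 0 * g 1 1 = 1 := by simpa [hg0] using sl2_det_eq g
    have hhd : h 0 0 * h 1 1 = 1 := by simpa [hh0] using sl2_det_eq h
    simp only [commutatorElement_def, Matrix.SpecialLinearGroup.coe_mul,
      Matrix.SpecialLinearGroup.coe_inv, adjugate_fin_two, mul_apply, Fin.sum_univ_two]
    simp [hg0, hh0]
    linear_combination (h 0 0 * h 1 1) * hgd + hhd
  exact (eq_upperE h00 (hH _ (commutator_le_self H (commutator_mem_commutator hg hh)))).symm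

theorem eq_top_of_upperE_mem {ℓ : ℕ} [Fact ℓ.Prime]
    {H : Subgroup (SpecialLinearGroup (Fin 2) (ZMod ℓ))} {a : ZMod ℓ} (ha : a ≠ 0)
    (haH : upperE a ∈ H) (hH : ∃ h ∈ H, h 1 0 ≠ 0) : H = ⊤ := by
  have hU (x : ZMod ℓ) : upperE x ∈ H := by
    have : upperE a ^ (x / a).val = upperE x := by
      rw [upperE_pow, ZMod.natCast_zmod_val, div_mul_cancel₀ _ ha]
    exact this ▸ pow_mem haH _
  refine eq_top_of_elementary_mem hU fun x => ?_
  obtain ⟨h, hh, hc⟩ := hH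
  obtain ⟨w, hw, hcoe⟩ : ∃ w ∈ H, (w : Matrix (Fin 2) (Fin 2) (ZMod ℓ)) =
      !![0, -(h 1 0)⁻¹; h 1 0, 0] := by
    refine ⟨_, mul_mem (mul_mem (hU (-(h 0 0) / h 1 0)) hh) (hU (-(h 1 1) / h 1 0)), ?_⟩
    have hdet := sl2_det_eq h
    rw [Matrix.SpecialLinearGroup.coe_mul, Matrix.SpecialLinearGroup.coe_mul,
      eta_fin_two (h : Matrix (Fin 2) (Fin 2) (ZMod ℓ)), upperE_coe, upperE_coe, mul_fin_two,
      mul_fin_two]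
    ext i j
    fin_cases i <;> fin_cases j <;> simp <;> field_simp <;>
      first | linear_combination -hdet | ring
  have key : lowerE x * w = w * upperE (-x / h 1 0 ^ 2) := by
    apply sl2_ext
    rw [Matrix.SpecialLinearGroup.coe_mul, Matrix.SpecialLinearGroup.coe_mul, hcoe, lowerE_coe,
      upperE_coe, mul_fin_two, mul_fin_two]
    ext i j
    fin_cases i <;> fin_cases j <;> simp
    field_simp
  rw [eq_mul_inv_of_mul_eq key]
  exact mul_mem (mul_mem hw (hU _)) (inv_mem hw)

theorem sl2_eq_top_of_hasSection {ℓ : ℕ} [Fact ℓ.Prime] (hℓ : ℓ.Coprime 30)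
    {H : Subgroup (SpecialLinearGroup (Fin 2) (ZMod ℓ))} (h : HasSection (PSL2 ℓ) H) :
    H = ⊤ := by
  have := psl2_isSimpleGroup hℓ
  obtain ⟨g, hgH, hg⟩ : ∃ g ∈ H, orderOf g = ℓ := by
    obtain ⟨K, hK, f, hf⟩ := h
    have h1 : ℓ ∣ Nat.card (PSL2 ℓ) := by
      simpa using Subgroup.card_dvd_of_injective (psl2Upper ℓ) psl2Upper_injective
    obtain ⟨g, hg⟩ := exists_prime_orderOf_dvd_card' ℓ
      (h1.trans (Subgroup.card_dvd_of_surjective f hf))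
    exact ⟨g, hK g.2, by rwa [Subgroup.orderOf_coe]⟩
  obtain ⟨δ, a, hδ⟩ := exists_conj_eq_upperE (det_sub_one_eq_zero (hg ▸ pow_orderOf_eq_one g))
  have hconj : MulAut.conj δ⁻¹ g = upperE a := by simpa using hδ
  have ha : a ≠ 0 := by
    rintro rfl
    rw [upperE_zero, EmbeddingLike.map_eq_one_iff] at hconj
    rw [hconj, orderOf_one] at hg
    exact (Fact.out : ℓ.Prime).one_lt.ne hg
  have h' := h.map_of_injective (φ := (MulAut.conj δ⁻¹).toMonoidHom) (MulAut.conj δ⁻¹).injective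
  have htop : H.map (MulAut.conj δ⁻¹).toMonoidHom = ⊤ := by
    refine eq_top_of_upperE_mem ha ⟨g, hgH, hconj⟩ ?_
    by_contra! hc
    refine not_hasSection_of_comm (psl2_not_comm hℓ) ?_
      ((h'.commutator (psl2_not_comm hℓ)).mono (commutator_le_range_upperEHom hc))
    rintro _ ⟨x, rfl⟩ _ ⟨y, rfl⟩
    rw [← map_mul, mul_comm, map_mul]
  exact map_injective (MulAut.conj δ⁻¹).injective (htop.trans
    (map_top_of_surjective _ (MulAut.conj δ⁻¹).surjective).symm)

theorem exists_one_add_pow_prime {M : Type*} [Ring M] (w : M) {ℓ : ℕ} (hℓ : ℓ.Prime)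
    (h5 : 5 ≤ ℓ) : ∃ q r : M, (1 + w) ^ ℓ = 1 + ℓ • w + ℓ • (w ^ 2 * q) + w ^ 4 * r := by
  obtain ⟨s, hs⟩ := exists_add_pow_prime_eq hℓ (1 : Polynomial ℤ) Polynomial.X
  have h1 := congrArg (Polynomial.coeff · 1) hs
  have hs0 : s.coeff 0 = 1 := by
    have hne : 1 ≠ ℓ := by omega
    simp only [one_pow, mul_one, Polynomial.coeff_add, Polynomial.coeff_one_add_X_pow,
      Polynomial.coeff_X_pow, hne, if_false, Polynomial.coeff_one, Nat.choose_one_right,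
      mul_assoc, ← Polynomial.C_eq_natCast, Polynomial.coeff_C_mul, Polynomial.coeff_X_mul] at h1
    simpa [hℓ.ne_zero] using h1
  obtain ⟨q, hq⟩ := Polynomial.X_dvd_sub_C (p := s)
  have hsq : s = 1 + Polynomial.X * q := by
    rw [← hq, hs0, Polynomial.C_1]; ring
  refine ⟨Polynomial.aeval w q, w ^ (ℓ - 4), ?_⟩
  have := congrArg (Polynomial.aeval w) hs
  simp only [hsq, map_pow, map_add, map_one, Polynomial.aeval_X, map_mul, map_natCast, one_pow,
    mul_one] at this
  rw [this, ← pow_add, Nat.add_sub_cancel' (by omega : 4 ≤ ℓ), nsmul_eq_mul, nsmul_eq_mul]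
  noncomm_ring

theorem exists_pow_prime_eq_s5 {M : Type*} [Ring M] {ℓ : ℕ} (hℓ : ℓ.Prime) (h5 : 5 ≤ ℓ) {g u v : M}
    (hu : u * u = 0) {j : ℕ} (hg : g = 1 + ℓ ^ j • u + ℓ ^ (j + 1) • v) :
    ∃ v', g ^ ℓ = 1 + ℓ ^ (j + 1) • u + ℓ ^ (j + 2) • v' := by
  set w := ℓ ^ j • (u + ℓ • v) with hw
  obtain ⟨x, hx⟩ : ∃ x, w ^ 2 = ℓ ^ (2 * j + 1) • x := by
    refine ⟨u * v + v * u + ℓ • (v * v), ?_⟩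
    rw [pow_two, hw]
    simp only [mul_add, add_mul, smul_add, smul_mul_assoc, mul_smul_comm, hu, smul_zero, zero_add]
    module
  obtain ⟨q, r, hqr⟩ := exists_one_add_pow_prime w hℓ h5
  refine ⟨v + ℓ ^ j • (x * q) + ℓ ^ (3 * j) • (x * x * r), ?_⟩
  have hgw : g = 1 + w := by rw [hg, hw]; module
  rw [hgw, hqr, show w ^ 4 = w ^ 2 * w ^ 2 by rw [← pow_add], hx, hw]
  simp only [smul_mul_assoc, mul_smul_comm]
  module

section Lifting

variable {ℓ k : ℕ} (G : Subgroup (SpecialLinearGroup (Fin 2) (ZMod (ℓ ^ k))))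

/-- The leading terms of the elements of `G` congruent to `1` modulo `ℓ ^ j`. -/
def leadingTerms {j : ℕ} (hj : 1 ≤ j) : AddSubmonoid (Matrix (Fin 2) (Fin 2) (ZMod (ℓ ^ k))) where
  carrier := {a | ∃ g ∈ G, ∃ v, (g : Matrix (Fin 2) (Fin 2) (ZMod (ℓ ^ k))) =
    1 + ℓ ^ j • a + ℓ ^ (j + 1) • v}
  zero_mem' := ⟨1, one_mem _, 0, by simp⟩
  add_mem' := by
    rintro a b ⟨g, hg, v, hgv⟩ ⟨h, hh, w, hhw⟩
    obtain ⟨i, rfl⟩ := Nat.exists_eq_add_of_le' hj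
    refine ⟨g * h, mul_mem hg hh, v + w + ℓ ^ i • ((a + ℓ • v) * (b + ℓ • w)), ?_⟩
    rw [Matrix.SpecialLinearGroup.coe_mul, hgv, hhw]
    simp only [mul_add, add_mul, smul_mul_assoc, mul_smul_comm, mul_one, one_mul]
    module

variable {G}

theorem smul_mem_leadingTerms {j : ℕ} (hj : 1 ≤ j) (b : Matrix (Fin 2) (Fin 2) (ZMod (ℓ ^ k))) :
    ℓ • b ∈ leadingTerms G hj :=
  ⟨1, one_mem _, -b, by rw [Matrix.SpecialLinearGroup.coe_one]; module⟩

theorem exists_smul_of_castHom_eq_zero {m : ℕ} (h : ℓ ∣ m) {a : ZMod m}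
    (ha : ZMod.castHom h (ZMod ℓ) a = 0) : ∃ b, a = ℓ • b := by
  obtain ⟨a, rfl⟩ := ZMod.intCast_surjective a
  rw [map_intCast, ZMod.intCast_zmod_eq_zero_iff_dvd] at ha
  obtain ⟨b, rfl⟩ := ha
  exact ⟨b, by push_cast; rw [nsmul_eq_mul]⟩

theorem exists_coe_eq_add_smul (hk : k ≠ 0)
    (hG : G.map (SpecialLinearGroup.map (ZMod.castHom (dvd_pow_self ℓ hk) (ZMod ℓ))) = ⊤)
    (h : SpecialLinearGroup (Fin 2) (ZMod (ℓ ^ k))) :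
    ∃ g ∈ G, ∃ v, (g : Matrix (Fin 2) (Fin 2) (ZMod (ℓ ^ k))) = h + ℓ • v := by
  obtain ⟨g, hg, hgh⟩ : SpecialLinearGroup.map (ZMod.castHom (dvd_pow_self ℓ hk) (ZMod ℓ)) h ∈
    G.map (SpecialLinearGroup.map (ZMod.castHom (dvd_pow_self ℓ hk) (ZMod ℓ))) := hG ▸ mem_top _
  have key (i j : Fin 2) : ∃ b, g i j - h i j = ℓ • b := by
    apply exists_smul_of_castHom_eq_zero (dvd_pow_self ℓ hk)
    rw [map_sub, sub_eq_zero]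
    exact congrArg (fun x : SpecialLinearGroup (Fin 2) (ZMod ℓ) => x i j) hgh
  choose v hv using key
  exact ⟨g, hg, Matrix.of v, by
    ext i j
    simpa [sub_eq_iff_eq_add'] using hv i j⟩

variable [Fact ℓ.Prime]

theorem sub_one_mem_leadingTerms (h5 : 5 ≤ ℓ) (hk : k ≠ 0)
    (hG : G.map (SpecialLinearGroup.map (ZMod.castHom (dvd_pow_self ℓ hk) (ZMod ℓ))) = ⊤)
    {t : SpecialLinearGroup (Fin 2) (ZMod (ℓ ^ k))}
    (ht : ((t : Matrix (Fin 2) (Fin 2) (ZMod (ℓ ^ k))) - 1) *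
      ((t : Matrix (Fin 2) (Fin 2) (ZMod (ℓ ^ k))) - 1) = 0) {j : ℕ} (hj : 1 ≤ j) :
    (t : Matrix (Fin 2) (Fin 2) (ZMod (ℓ ^ k))) - 1 ∈ leadingTerms G hj := by
  suffices ∃ g ∈ G, ∃ v, (g : Matrix (Fin 2) (Fin 2) (ZMod (ℓ ^ k))) =
    1 + ℓ ^ j • ((t : Matrix (Fin 2) (Fin 2) (ZMod (ℓ ^ k))) - 1) + ℓ ^ (j + 1) • v from this
  clear hj
  induction j with
  | zero =>
    obtain ⟨g, hg, v, hv⟩ := exists_coe_eq_add_smul hk hG t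
    exact ⟨g, hg, v, by rw [hv]; module⟩
  | succ j ih =>
    obtain ⟨g, hg, v, hv⟩ := ih
    obtain ⟨v', hv'⟩ := exists_pow_prime_eq_s5 Fact.out h5 ht hv
    exact ⟨g ^ ℓ, pow_mem hg _, v', by rw [Matrix.SpecialLinearGroup.coe_pow, hv']⟩

theorem exists_smul_of_pow_smul_eq_zero {j : ℕ} (hj : j < k) {t : ZMod (ℓ ^ k)}
    (ht : ℓ ^ j • t = 0) : ∃ b, t = ℓ • b := by
  obtain ⟨t, rfl⟩ := ZMod.intCast_surjective t
  have h1 : ((ℓ ^ j * t : ℤ) : ZMod (ℓ ^ k)) = 0 := by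
    rw [← ht, nsmul_eq_mul]; push_cast; rfl
  rw [ZMod.intCast_zmod_eq_zero_iff_dvd] at h1
  have h2 : (ℓ : ℤ) ^ j * ℓ ∣ ℓ ^ j * t := (pow_succ (ℓ : ℤ) j ▸ pow_dvd_pow _ hj).trans
    (by exact_mod_cast h1)
  obtain ⟨b, rfl⟩ := Int.dvd_of_mul_dvd_mul_left
    (pow_ne_zero _ (by exact_mod_cast (Fact.out : ℓ.Prime).ne_zero)) h2
  exact ⟨b, by push_cast; rw [nsmul_eq_mul]⟩

theorem mem_leadingTerms_of_det (h5 : 5 ≤ ℓ) (hk : k ≠ 0)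
    (hG : G.map (SpecialLinearGroup.map (ZMod.castHom (dvd_pow_self ℓ hk) (ZMod ℓ))) = ⊤)
    {j : ℕ} (hj : 1 ≤ j) (hjk : j < k) {a : Matrix (Fin 2) (Fin 2) (ZMod (ℓ ^ k))}
    (ha : (1 + ℓ ^ j • a).det = 1) : a ∈ leadingTerms G hj := by
  obtain ⟨i, rfl⟩ := Nat.exists_eq_add_of_le' hj
  obtain ⟨b, hb⟩ : ∃ b, a 0 0 + a 1 1 + ℓ ^ (i + 1) • a.det = ℓ • b := by
    refine exists_smul_of_pow_smul_eq_zero hjk ?_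
    rw [← Nat.cast_smul_eq_nsmul (ZMod (ℓ ^ k))] at ha
    rw [det_fin_two] at ha ⊢
    simp only [Matrix.add_apply, Matrix.smul_apply, nsmul_eq_mul, smul_eq_mul, one_apply_eq,
      one_apply_ne, ne_eq,
      zero_ne_one, one_ne_zero, not_false_eq_true, zero_add] at ha ⊢
    linear_combination ha
  have hU := sub_one_mem_leadingTerms h5 hk hG (t := upperE 1) (by
    ext i j; fin_cases i <;> fin_cases j <;> simp [upperE_coe, mul_apply]) hj
  have hL := sub_one_mem_leadingTerms h5 hk hG (t := lowerE 1) (by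
    ext i j; fin_cases i <;> fin_cases j <;> simp [lowerE_coe, mul_apply]) hj
  have hM := sub_one_mem_leadingTerms h5 hk hG (t := ⟨!![2, -1; 1, 0], by simp⟩) (by
    ext i j; fin_cases i <;> fin_cases j <;> simp [mul_apply] <;> norm_num) hj
  have : NeZero (ℓ ^ k) := ⟨pow_ne_zero _ (Fact.out : ℓ.Prime).ne_zero⟩
  have := add_mem (add_mem (add_mem (nsmul_mem hU (a 0 1 + a 0 0).val)
    (nsmul_mem hL (a 1 0 - a 0 0).val)) (nsmul_mem hM (a 0 0).val))
    (smul_mem_leadingTerms (G := G) hj !![0, 0; 0, b - ℓ ^ i • a.det])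
  simp only [← Nat.cast_smul_eq_nsmul (ZMod (ℓ ^ k)), ZMod.natCast_zmod_val] at this hb
  convert this using 1
  simp only [smul_eq_mul, Nat.cast_pow] at hb
  ext r c
  fin_cases r <;> fin_cases c <;> simp [upperE_coe, lowerE_coe]
  · ring
  · linear_combination hb

theorem eq_top_of_map_eq_top (h5 : 5 ≤ ℓ) (hk : k ≠ 0)
    (hG : G.map (SpecialLinearGroup.map (ZMod.castHom (dvd_pow_self ℓ hk) (ZMod ℓ))) = ⊤) :
    G = ⊤ := by
  have key (i : ℕ) (hi : i < k) (h : SpecialLinearGroup (Fin 2) (ZMod (ℓ ^ k))) (a)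
      (ha : (h : Matrix (Fin 2) (Fin 2) (ZMod (ℓ ^ k))) = 1 + ℓ ^ (k - i) • a) : h ∈ G := by
    induction i generalizing h a with
    | zero =>
      convert one_mem G
      apply sl2_ext
      rw [ha, tsub_zero, ← Nat.cast_smul_eq_nsmul (ZMod (ℓ ^ k)), ZMod.natCast_self, zero_smul,
        add_zero, Matrix.SpecialLinearGroup.coe_one]
    | succ i ih =>
      obtain ⟨g, hg, v, hv⟩ := mem_leadingTerms_of_det h5 hk hG (j := k - (i + 1)) (by omega)
        (by omega) (a := a) (ha ▸ h.2)
      rw [← mul_mem_cancel_left (inv_mem hg)]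
      refine ih (by omega) _ (-(g⁻¹).1 * v) ?_
      have : (h : Matrix (Fin 2) (Fin 2) (ZMod (ℓ ^ k))) = g - ℓ ^ (k - i) • v := by
        rw [ha, hv, show k - (i + 1) + 1 = k - i by omega]; abel
      rw [Matrix.SpecialLinearGroup.coe_mul, this, mul_sub, ← Matrix.SpecialLinearGroup.coe_mul,
        inv_mul_cancel, Matrix.SpecialLinearGroup.coe_one, mul_smul_comm, neg_mul, smul_neg,
        sub_eq_add_neg]
  refine eq_top_iff.mpr fun h _ => ?_
  obtain ⟨g, hg, v, hv⟩ := exists_coe_eq_add_smul hk hG h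
  rw [← mul_mem_cancel_left (inv_mem hg)]
  refine key (k - 1) (by omega) _ (-(g⁻¹).1 * v) ?_
  have : (h : Matrix (Fin 2) (Fin 2) (ZMod (ℓ ^ k))) = g - ℓ • v := by rw [hv]; abel
  rw [Matrix.SpecialLinearGroup.coe_mul, this, mul_sub, ← Matrix.SpecialLinearGroup.coe_mul,
    inv_mul_cancel, Matrix.SpecialLinearGroup.coe_one, mul_smul_comm, neg_mul, smul_neg,
    sub_eq_add_neg, show k - (k - 1) = 1 by omega, pow_one]

end Lifting

theorem redGL_toGL {m n : ℕ} (h : n ∣ m) (g : SpecialLinearGroup (Fin 2) (ZMod m)) :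
    redGL h (Matrix.SpecialLinearGroup.toGL g) =
      Matrix.SpecialLinearGroup.toGL (SpecialLinearGroup.map (ZMod.castHom h (ZMod n)) g) := by
  ext i j
  rfl

theorem toGL_injective {R : Type*} [CommRing R] : Function.Injective
    (Matrix.SpecialLinearGroup.toGL : SpecialLinearGroup (Fin 2) R →* GL (Fin 2) R) :=
  fun _ _ h => sl2_ext (congrArg Units.val h)

theorem comap_toGL_eq_top_of_hasSection {ℓ k : ℕ} [Fact ℓ.Prime] (hℓ : ℓ.Coprime 30) (hk : k ≠ 0)
    {G : Subgroup (GL (Fin 2) (ZMod (ℓ ^ k)))} (hG : HasSection (PSL2 ℓ) G) :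
    G.comap Matrix.SpecialLinearGroup.toGL = ⊤ := by
  have := psl2_isSimpleGroup hℓ
  have hS := psl2_not_comm hℓ
  have hprime : ℓ.Prime := Fact.out
  have h5 : 5 ≤ ℓ := by
    by_contra! h
    have := hprime.two_le
    interval_cases ℓ <;> revert hℓ <;> decide
  refine eq_top_of_map_eq_top h5 hk ?_
  obtain ⟨p, hp, hpℓ, h⟩ := exists_prime_hasSection_map_redGL hS (pow_ne_zero k hprime.ne_zero) _
    ((hG.comap_toGL hS).map_of_injective toGL_injective)
  obtain rfl := (Nat.prime_dvd_prime_iff_eq hp hprime).mp (hp.dvd_of_dvd_pow hpℓ)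
  rw [Subgroup.map_map, show (redGL hpℓ).comp Matrix.SpecialLinearGroup.toGL =
    Matrix.SpecialLinearGroup.toGL.comp (SpecialLinearGroup.map (ZMod.castHom hpℓ (ZMod p))) from
    MonoidHom.ext (redGL_toGL hpℓ), ← Subgroup.map_map] at h
  have := sl2_eq_top_of_hasSection hℓ (h.comap_toGL hS)
  rwa [comap_map_eq_self_of_injective toGL_injective] at this

theorem eq_one_of_mem_ker {a n : ℕ} (han : a.Coprime n) {g : GL (Fin 2) (ZMod (a * n))}
    (ha : g ∈ (redGL (dvd_mul_right a n)).ker) (hn : g ∈ (redGL (dvd_mul_left n a)).ker) :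
    g = 1 := by
  have key : g.1 - 1 = 0 := by
    ext i j
    have h1 := castHom_sub_one_eq_zero _ ha i j
    have h2 := castHom_sub_one_eq_zero _ hn i j
    obtain ⟨b, hb⟩ := ZMod.intCast_surjective ((g.1 - 1) i j)
    rw [← hb, map_intCast, ZMod.intCast_zmod_eq_zero_iff_dvd] at h1 h2
    rw [← hb, Matrix.zero_apply, ZMod.intCast_zmod_eq_zero_iff_dvd]
    push_cast
    exact (Nat.isCoprime_iff_coprime.mpr han).mul_dvd h1 h2
  exact Units.ext (sub_eq_zero.mp key)

theorem toGL_mem_of_hasSection {ℓ k n : ℕ} [Fact ℓ.Prime] (hℓ : ℓ.Coprime 30) (hk : k ≠ 0)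
    (hn : ¬ ℓ ∣ n) (hn2 : ¬ 2 ∣ n) {G : Subgroup (GL (Fin 2) (ZMod (ℓ ^ k * n)))}
    (hG : HasSection (PSL2 ℓ) G) {g : SpecialLinearGroup (Fin 2) (ZMod (ℓ ^ k * n))}
    (hg : Matrix.SpecialLinearGroup.toGL g ∈ (redGL (dvd_mul_left n (ℓ ^ k))).ker) :
    Matrix.SpecialLinearGroup.toGL g ∈ G := by
  have := psl2_isSimpleGroup hℓ
  have hS := psl2_not_comm hℓ
  have hcop : (ℓ ^ k).Coprime n := Nat.Coprime.pow_left k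
    (((Fact.out : ℓ.Prime).coprime_iff_not_dvd).mpr hn)
  have hker : HasSection (PSL2 ℓ) (G ⊓ (redGL (dvd_mul_left n (ℓ ^ k))).ker) := by
    refine (hG.ker_or_map _).resolve_right fun h => ?_
    obtain ⟨p, hp, hpn, h⟩ := exists_prime_hasSection_map_redGL hS
      (by rintro rfl; exact hn2 (dvd_zero 2)) _ h
    have : Fact p.Prime := ⟨hp⟩
    exact not_hasSection_gl_of_ne (fun h2 => hn2 (h2 ▸ hpn)) hℓ (fun h => hn (h ▸ hpn)) _ h
  have hmap := (hker.ker_or_map (redGL (dvd_mul_right (ℓ ^ k) n))).resolve_left <| by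
    refine not_hasSection_of_comm hS ?_
    rintro x ⟨⟨-, hxn⟩, hxp⟩ y ⟨⟨-, hyn⟩, hyp⟩
    exact mul_comm_of_mem_ker hxp hyp hxn hyn
  have htop := comap_toGL_eq_top_of_hasSection hℓ hk hmap
  obtain ⟨x, ⟨hxG, hxn⟩, hx⟩ := (eq_top_iff.mp htop) (mem_top
    (SpecialLinearGroup.map (ZMod.castHom (dvd_mul_right (ℓ ^ k) n) (ZMod (ℓ ^ k))) g))
  rw [← redGL_toGL] at hx
  have h1 := eq_one_of_mem_ker hcop (g := x⁻¹ * Matrix.SpecialLinearGroup.toGL g)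
    (by rw [MonoidHom.mem_ker, map_mul, map_inv, hx, inv_mul_cancel])
    (mul_mem (inv_mem hxn) hg)
  rwa [← inv_mul_eq_one.mp h1]

theorem exists_elementary_mem {ℓ m : ℕ} [Fact ℓ.Prime] (hm : m ≠ 0) (hcop : m.Coprime 30)
    (hℓm : ℓ ∣ m) {G : Subgroup (GL (Fin 2) (ZMod m))} (hG : HasSection (PSL2 ℓ) G) :
    ∃ n : ℕ, ¬ ℓ ∣ n ∧ ∀ x : ZMod m, Matrix.SpecialLinearGroup.toGL (upperE (n * x)) ∈ G ∧
      Matrix.SpecialLinearGroup.toGL (lowerE (n * x)) ∈ G := by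
  have hℓ : ℓ.Coprime 30 := hcop.coprime_dvd_left hℓm
  have hprime : ℓ.Prime := Fact.out
  obtain ⟨k, n, hn, rfl⟩ := Nat.exists_eq_pow_mul_and_not_dvd hm ℓ hprime.ne_one
  have hk : k ≠ 0 := by
    rintro rfl
    exact hn (by simpa using hℓm)
  have hn2 : ¬ 2 ∣ n := fun h => by
    have := Nat.eq_one_of_dvd_coprimes hcop (h.mul_left (ℓ ^ k)) (by norm_num : 2 ∣ 30)
    omega
  have h0 (x : ZMod (ℓ ^ k * n)) :
      ZMod.castHom (dvd_mul_left n (ℓ ^ k)) (ZMod n) (n * x) = 0 := by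
    rw [map_mul, map_natCast, ZMod.natCast_self, zero_mul]
  refine ⟨n, hn, fun x => ⟨toGL_mem_of_hasSection hℓ hk hn hn2 hG ?_,
    toGL_mem_of_hasSection hℓ hk hn hn2 hG ?_⟩⟩
  · rw [MonoidHom.mem_ker, redGL_toGL, map_upperE, h0, upperE_zero, map_one]
  · rw [MonoidHom.mem_ker, redGL_toGL, map_lowerE, h0, lowerE_zero, map_one]

theorem exists_prime_natCast_mem {R : Type*} [CommRing R] {P : Ideal R} [P.IsPrime] {m : ℕ}
    (hm : m ≠ 0) (h : (m : R) ∈ P) : ∃ ℓ, ℓ.Prime ∧ ℓ ∣ m ∧ (ℓ : R) ∈ P := by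
  induction m using induction_on_primes with
  | zero => exact absurd rfl hm
  | one => exact absurd ((Ideal.eq_top_iff_one P).mpr (by simpa using h)) Ideal.IsPrime.ne_top'
  | prime_mul p a hp ih =>
    rw [Nat.cast_mul] at h
    rcases Ideal.IsPrime.mem_or_mem ‹_› h with h | h
    · exact ⟨p, hp, dvd_mul_right p a, h⟩
    · obtain ⟨ℓ, h1, h2, h3⟩ := ih (right_ne_zero_of_mul hm) h
      exact ⟨ℓ, h1, h2.mul_left p, h3⟩

/-- The ideal of all `y` such that `H` contains the elementary matrices with entry divisible
by `y`. -/
def elementaryIdeal {R : Type*} [CommRing R] (H : Subgroup (SpecialLinearGroup (Fin 2) R)) :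
    Ideal R where
  carrier := {y | ∀ x, upperE (y * x) ∈ H ∧ lowerE (y * x) ∈ H}
  zero_mem' x := by
    rw [zero_mul]
    exact ⟨upperE_zero (R := R) ▸ one_mem H, lowerE_zero (R := R) ▸ one_mem H⟩
  add_mem' ha hb x := by
    rw [add_mul, upperE_add, lowerE_add]
    exact ⟨mul_mem (ha x).1 (hb x).1, mul_mem (ha x).2 (hb x).2⟩
  smul_mem' c y hy x := by
    rw [smul_eq_mul, mul_comm c, mul_assoc]
    exact hy (c * x)

theorem range_toGL_le_of_hasSection {m : ℕ} (hm : m ≠ 0) (hcop : m.Coprime 30)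
    {G : Subgroup (GL (Fin 2) (ZMod m))}
    (hG : ∀ ℓ : ℕ, ℓ.Prime → ℓ ∣ m → HasSection (PSL2 ℓ) G) :
    (Matrix.SpecialLinearGroup.toGL :
      SpecialLinearGroup (Fin 2) (ZMod m) →* GL (Fin 2) (ZMod m)).range ≤ G := by
  have : NeZero m := ⟨hm⟩
  set I := elementaryIdeal (G.comap Matrix.SpecialLinearGroup.toGL) with hI
  have htop : I = ⊤ := by
    by_contra hne
    obtain ⟨P, hP, hIP⟩ := Ideal.exists_le_maximal I hne
    have := hP.isPrime
    obtain ⟨ℓ, hℓ, hℓm, hℓP⟩ := exists_prime_natCast_mem (P := P) hm (by simp)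
    have : Fact ℓ.Prime := ⟨hℓ⟩
    obtain ⟨n, hn, hnG⟩ := exists_elementary_mem hm hcop hℓm (hG ℓ hℓ hℓm)
    have hnP : (n : ZMod m) ∈ P := hIP hnG
    obtain ⟨a, b, hab⟩ := Nat.isCoprime_iff_coprime.mpr ((hℓ.coprime_iff_not_dvd).mpr hn)
    have h1 : (a : ZMod m) * ℓ + b * n = 1 := by
      exact_mod_cast congrArg (Int.cast (R := ZMod m)) hab
    exact hP.ne_top ((Ideal.eq_top_iff_one P).mpr
      (h1 ▸ add_mem (P.mul_mem_left _ hℓP) (P.mul_mem_left _ hnP)))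
  have h1 : (1 : ZMod m) ∈ I := htop ▸ Submodule.mem_top
  have hH : G.comap Matrix.SpecialLinearGroup.toGL = ⊤ :=
    eq_top_of_elementary_mem (fun x => one_mul x ▸ (h1 x).1) (fun x => one_mul x ▸ (h1 x).2)
  rintro _ ⟨g, rfl⟩
  exact (eq_top_iff.mp hH) (mem_top g)

theorem hasSection_of_range_toGL_le {m ℓ : ℕ} [NeZero ℓ] (hℓm : ℓ ∣ m)
    {G : Subgroup (GL (Fin 2) (ZMod m))} (hG : (Matrix.SpecialLinearGroup.toGL :
      SpecialLinearGroup (Fin 2) (ZMod m) →* GL (Fin 2) (ZMod m)).range ≤ G) :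
    HasSection (PSL2 ℓ) G := by
  have h : HasSection (PSL2 ℓ) (⊤ : Subgroup (SpecialLinearGroup (Fin 2) (ZMod m))) :=
    ⟨⊤, le_rfl, ((QuotientGroup.mk' _).comp (SpecialLinearGroup.map (ZMod.castHom hℓm _))).comp
      (⊤ : Subgroup _).subtype, (((QuotientGroup.mk'_surjective _).comp
        (slMap_castHom_surjective hℓm)).comp fun x => ⟨⟨x, mem_top x⟩, rfl⟩)⟩
  exact (h.map_of_injective toGL_injective).mono
    (((MonoidHom.range_eq_map _).symm.le).trans hG)

/-- For `m` coprime to `30` and `G ≤ GL₂(ℤ/mℤ)`: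
`SL₂(ℤ/mℤ) ⊆ G` iff `PSL₂(ℤ/ℓℤ) ∈ Occ(G)` for every prime `ℓ ∣ m`. -/
theorem stmt_5 (m : ℕ) (hm : 0 < m) (hcop : Nat.Coprime m 30)
    (G : Subgroup (GL (Fin 2) (ZMod m))) :
    (Matrix.SpecialLinearGroup.toGL :
        Matrix.SpecialLinearGroup (Fin 2) (ZMod m) →* GL (Fin 2) (ZMod m)).range ≤ G ↔
      ∀ ℓ : ℕ, ℓ.Prime → ℓ ∣ m → MemOcc ↥G (PSL2 ℓ) := by
  constructor
  · intro hG ℓ hℓ hℓm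
    have : Fact ℓ.Prime := ⟨hℓ⟩
    have : NeZero ℓ := ⟨hℓ.ne_zero⟩
    have hℓ30 : ℓ.Coprime 30 := hcop.coprime_dvd_left hℓm
    exact memOcc_iff.mpr ⟨psl2_isSimpleGroup hℓ30, psl2_not_comm hℓ30,
      hasSection_of_range_toGL_le hℓm hG⟩
  · exact fun h => range_toGL_le_of_hasSection hm.ne' hcop
      fun ℓ hℓ hℓm => (memOcc_iff.mp (h ℓ hℓ hℓm)).2.2
end

section
/- Every matrix A ∈ M_n(ℤ/ℓℤ) with trace zero can be written as a sum of four matrices each of whose squares is the zero matrix. -/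
open Module

theorem Disjoint.exists_le_disjoint_sup_eq {α : Type*} [Lattice α] [BoundedOrder α]
    [IsModularLattice α] [ComplementedLattice α] {S T K : α} (h : Disjoint S T) (hS : S ≤ K)
    (hT : T ≤ K) : ∃ V, S ≤ V ∧ Disjoint V T ∧ V ⊔ T = K := by
  obtain ⟨C, hSC, hC⟩ := h.exists_isCompl
  refine ⟨C ⊓ K, le_inf hSC hS, hC.disjoint.mono_left inf_le_left, ?_⟩
  rw [sup_comm, ← sup_inf_assoc_of_le _ hT, hC.symm.sup_eq_top, top_inf_eq]

section Endomorphisms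

variable {F V : Type*} [Field F] [AddCommGroup V] [Module F V]

/-- A `ℤ/2`-grading, for which `N` is odd, of the image of an `N`-invariant submodule `U` extends
to a grading of `U`. -/
theorem Submodule.exists_odd_grading_of_map {N : End F V} {U W W₀ W₁ : Submodule F V}
    (hW : U.map N = W) (hWU : W ≤ U) (hd : Disjoint W₀ W₁) (hs : W₀ ⊔ W₁ = W)
    (h₀ : W₀ ≤ W₁.comap N) (h₁ : W₁ ≤ W₀.comap N) :
    ∃ V₀ V₁ : Submodule F V, Disjoint V₀ V₁ ∧ V₀ ⊔ V₁ = U ∧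
      V₀ ≤ V₁.comap N ∧ V₁ ≤ V₀.comap N := by
  have hW₀U : W₀ ≤ U := (le_sup_left.trans hs.le).trans hWU
  have hW₁U : W₁ ≤ U := (le_sup_right.trans hs.le).trans hWU
  have hker (W' : Submodule F V) : U ⊓ LinearMap.ker N ≤ U ⊓ W'.comap N :=
    inf_le_inf_left _ fun x hx ↦ by simp_all
  obtain ⟨k₀, hk₀, hkd, hks⟩ := Disjoint.exists_le_disjoint_sup_eq
    (S := W₀ ⊓ LinearMap.ker N) (T := W₁ ⊓ LinearMap.ker N) (K := U ⊓ LinearMap.ker N)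
    (hd.mono inf_le_left inf_le_left) (inf_le_inf_right _ hW₀U) (inf_le_inf_right _ hW₁U)
  have hk₀' : k₀ ≤ U ⊓ LinearMap.ker N := hks ▸ le_sup_left
  have hk₁' : W₁ ⊓ LinearMap.ker N ≤ U ⊓ LinearMap.ker N := hks ▸ le_sup_right
  have hd₀ : Disjoint (W₀ ⊔ k₀) (W₁ ⊓ LinearMap.ker N) := by
    rw [Submodule.disjoint_def]
    intro x hx hx'
    obtain ⟨w, hw, c, hc, rfl⟩ := Submodule.mem_sup.1 hx
    have hcN : N c = 0 := (hk₀' hc).2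
    have hwN : N w = 0 := by simpa [hcN] using hx'.2
    exact Submodule.disjoint_def.1 hkd _ (add_mem (hk₀ ⟨hw, hwN⟩) hc) hx'
  have hd₁ : Disjoint W₁ k₀ := by
    rw [Submodule.disjoint_def]
    intro x hx hx'
    exact Submodule.disjoint_def.1 hkd _ hx' ⟨hx, (hk₀' hx').2⟩
  obtain ⟨V₀, hV₀, hVd₀, hVs₀⟩ := hd₀.exists_le_disjoint_sup_eq (K := U ⊓ W₁.comap N)
    (sup_le (le_inf hW₀U h₀) (hk₀'.trans (hker _))) (hk₁'.trans (hker _))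
  obtain ⟨V₁, hV₁, hVd₁, hVs₁⟩ := hd₁.exists_le_disjoint_sup_eq (K := U ⊓ W₀.comap N)
    (le_inf hW₁U h₁) (hk₀'.trans (hker _))
  have hVU₀ : V₀ ≤ U ⊓ W₁.comap N := hVs₀ ▸ le_sup_left
  have hVU₁ : V₁ ≤ U ⊓ W₀.comap N := hVs₁ ▸ le_sup_left
  refine ⟨V₀, V₁, ?_, le_antisymm ?_ ?_, ?_, ?_⟩
  · rw [Submodule.disjoint_def]
    intro x hx hx'
    have hxN : N x = 0 := Submodule.disjoint_def.1 hd _ (hVU₁ hx').2 (hVU₀ hx).2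
    have hxk : x ∈ k₀ ⊔ W₁ ⊓ LinearMap.ker N := by
      rw [hks]
      exact ⟨(hVU₀ hx).1, hxN⟩
    obtain ⟨a, ha, b, hb, rfl⟩ := Submodule.mem_sup.1 hxk
    have haV : a ∈ V₀ := hV₀ (le_sup_right (a := W₀) ha)
    obtain rfl := Submodule.disjoint_def.1 hVd₀ b ((add_mem_cancel_left haV).1 hx) hb
    rw [add_zero] at hx' ⊢
    exact Submodule.disjoint_def.1 hVd₁ _ hx' ha
  · exact sup_le (hVU₀.trans inf_le_left) (hVU₁.trans inf_le_left)
  · have hle : (U ⊓ W₁.comap N) ⊔ (U ⊓ W₀.comap N) ≤ V₀ ⊔ V₁ := by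
      rw [← hVs₀, ← hVs₁]
      refine sup_le (sup_le le_sup_left ?_) (sup_le le_sup_right ?_)
      · exact (inf_le_left.trans hV₁).trans le_sup_right
      · exact (le_sup_right.trans hV₀).trans le_sup_left
    intro u hu
    have hNu : N u ∈ W₀ ⊔ W₁ := by
      rw [hs, ← hW]
      exact Submodule.mem_map_of_mem hu
    obtain ⟨w₀, hw₀, w₁, hw₁, hw⟩ := Submodule.mem_sup.1 hNu
    have hw₀U : w₀ ∈ U.map N := by
      rw [hW, ← hs]
      exact le_sup_left (b := W₁) hw₀
    obtain ⟨u₀, hu₀, rfl⟩ := hw₀U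
    refine hle (Submodule.mem_sup.2 ⟨u - u₀, ⟨sub_mem hu hu₀, ?_⟩, u₀, ⟨hu₀, hw₀⟩, by abel⟩)
    have : N (u - u₀) = w₁ := by rw [map_sub, ← hw]; abel
    simpa [Submodule.mem_comap, this] using hw₁
  · exact (hVU₀.trans inf_le_right).trans (Submodule.comap_mono hV₁)
  · exact (hVU₁.trans inf_le_right).trans
      (Submodule.comap_mono (le_sup_left.trans hV₀))

theorem IsNilpotent.exists_odd_grading {N : End F V} (hN : IsNilpotent N) :
    ∃ V₀ V₁ : Submodule F V, IsCompl V₀ V₁ ∧ V₀ ≤ V₁.comap N ∧ V₁ ≤ V₀.comap N := by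
  obtain ⟨k, hk⟩ := hN
  suffices ∃ V₀ V₁ : Submodule F V, Disjoint V₀ V₁ ∧ V₀ ⊔ V₁ = LinearMap.range (N ^ 0) ∧
      V₀ ≤ V₁.comap N ∧ V₁ ≤ V₀.comap N by
    obtain ⟨V₀, V₁, hd, hs, h⟩ := this
    refine ⟨V₀, V₁, ⟨hd, codisjoint_iff.2 (hs.trans ?_)⟩, h⟩
    rw [pow_zero, End.one_eq_id, LinearMap.range_id]
  refine Nat.decreasingInduction (n := k) (motive := fun j _ ↦
    ∃ V₀ V₁ : Submodule F V, Disjoint V₀ V₁ ∧ V₀ ⊔ V₁ = LinearMap.range (N ^ j) ∧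
      V₀ ≤ V₁.comap N ∧ V₁ ≤ V₀.comap N) ?_ ?_ (Nat.zero_le k)
  · rintro j - ⟨W₀, W₁, hd, hs, h₀, h₁⟩
    refine Submodule.exists_odd_grading_of_map ?_ ?_ hd hs h₀ h₁
    · rw [_root_.pow_succ', End.mul_eq_comp, LinearMap.range_comp]
    · rw [_root_.pow_succ, End.mul_eq_comp]
      exact LinearMap.range_comp_le_range _ _
  · exact ⟨⊥, ⊥, disjoint_bot_left, by simp [hk], bot_le, bot_le⟩

theorem IsNilpotent.exists_add_sq_eq_zero {N : End F V} (hN : IsNilpotent N) :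
    ∃ N₁ N₂ : End F V, N₁ ^ 2 = 0 ∧ N₂ ^ 2 = 0 ∧ N = N₁ + N₂ := by
  obtain ⟨V₀, V₁, hc, h₀, h₁⟩ := hN.exists_odd_grading
  refine ⟨N ∘ₗ V₀.projection V₁ hc, N ∘ₗ V₁.projection V₀ hc.symm, ?_, ?_, ?_⟩
  · ext x
    have := h₀ (Submodule.projection_apply_mem hc x)
    simp [pow_two, (Submodule.projection_apply_eq_zero_iff hc).2 this]
  · ext x
    have := h₁ (Submodule.projection_apply_mem hc.symm x)
    simp [pow_two, (Submodule.projection_apply_eq_zero_iff hc.symm).2 this]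
  · rw [← LinearMap.comp_add, Submodule.projection_add_projection_eq_id, LinearMap.comp_id]

/-- The compression of `f` to the kernel of `φ`, along a vector `v` with `φ v = 1`. -/
def LinearMap.compressKer (f : End F V) (φ : Dual F V) (v : V) (hv : φ v = 1) :
    End F (LinearMap.ker φ) :=
  ((LinearMap.id - φ.smulRight v) ∘ₗ f ∘ₗ (LinearMap.ker φ).subtype).codRestrict _
    fun x ↦ by simp [hv]

@[simp]
theorem LinearMap.coe_compressKer_apply (f : End F V) (φ : Dual F V) (v : V) (hv : φ v = 1)
    (x : LinearMap.ker φ) : (f.compressKer φ v hv x : V) = f x - φ (f x) • v := by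
  rfl

/-- A basis of `ker φ` extends by `v` to a basis of `V` in which the diagonal entries of `f` are
`φ (f v)` followed by those of the compression of `f` to `ker φ`. -/
theorem LinearMap.exists_basis_repr_compressKer {m : ℕ} (f : End F V) (φ : Dual F V) (v : V)
    (hv : φ v = 1) (b : Basis (Fin m) F (LinearMap.ker φ)) :
    ∃ B : Basis (Fin (m + 1)) F V, B.coord 0 (f (B 0)) = φ (f v) ∧
      ∀ i : Fin m, B.coord i.succ (f (B i.succ)) = b.coord i (f.compressKer φ v hv (b i)) := by
  let B := Basis.mkFinCons v b
    (fun c x hx h ↦ by simpa [hv, LinearMap.mem_ker.1 hx] using congrArg φ h)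
    (fun z ↦ ⟨-φ z, by simp [hv]⟩)
  have hB : (B : Fin (m + 1) → V) = Fin.cons v ((↑) ∘ b) := Basis.coe_mkFinCons _ _ _ _
  have hB₀ : B 0 = v := by simp [hB]
  have hBs (i : Fin m) : B i.succ = b i := by simp [hB]
  have hcoord₀ : B.coord 0 = φ := by
    refine B.ext (Fin.cases ?_ fun i ↦ ?_)
    · rw [Basis.coord_apply, Basis.repr_self, hB₀, hv]
      simp
    · rw [Basis.coord_apply, Basis.repr_self, hBs, LinearMap.mem_ker.1 (b i).2]
      simp
  have hcoord (i : Fin m) : B.coord i.succ ∘ₗ (LinearMap.ker φ).subtype = b.coord i := by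
    refine b.ext fun j ↦ ?_
    simp [← hBs, Finsupp.single_apply]
  refine ⟨B, by rw [hcoord₀, hB₀], fun i ↦ ?_⟩
  rw [← hcoord, LinearMap.comp_apply, Submodule.subtype_apply, LinearMap.coe_compressKer_apply,
    map_sub, map_smul, hBs]
  conv_rhs => rw [← hB₀]
  simp

theorem LinearIndependent.exists_dual_apply_eq {ι : Type*} {v : ι → V}
    (hv : LinearIndependent F v) (c : ι → F) : ∃ φ : Dual F V, ∀ i, φ (v i) = c i := by
  obtain ⟨φ, hφ⟩ := LinearMap.exists_extend ((Basis.span hv).constr F c)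
  refine ⟨φ, fun i ↦ ?_⟩
  have := LinearMap.congr_fun hφ (Basis.span hv i)
  rwa [Basis.constr_basis, LinearMap.comp_apply, Submodule.subtype_apply,
    Basis.span_apply] at this

/-- A non-scalar endomorphism admits compressions to hyperplanes that are again non-scalar. -/
theorem LinearMap.exists_compressKer_ne_smul [FiniteDimensional F V] {f : End F V}
    (hf : ∀ c : F, f ≠ c • 1) :
    ∃ (φ : Dual F V) (v : V) (hv : φ v = 1), φ (f v) = 0 ∧
      (finrank F V ≤ 2 ∨ ∀ c : F, f.compressKer φ v hv ≠ c • 1) := by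
  obtain ⟨v, hli⟩ : ∃ v, LinearIndependent F ![v, f v] := by
    by_contra! h
    obtain ⟨c, hc⟩ := f.exists_eq_smul_id_of_forall_notLinearIndependent h
    exact hf c hc
  obtain hV | hV := le_or_gt (finrank F V) 2
  · obtain ⟨φ, hφ⟩ := hli.exists_dual_apply_eq ![1, 0]
    exact ⟨φ, v, hφ 0, hφ 1, .inl hV⟩
  obtain ⟨y, hy⟩ := exists_linearIndependent_cons_of_lt_finrank hli hV
  obtain ⟨φ, hφ⟩ := hy.exists_dual_apply_eq ![0, 1, 0]
  obtain ⟨ψ, hψ⟩ := hy.exists_dual_apply_eq ![1, 1, 0]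
  have hφy : φ y = 0 := hφ 0
  have hφv : φ v = 1 := hφ 1
  have hφf : φ (f v) = 0 := hφ 2
  have hψy : ψ y = 1 := hψ 0
  have hψv : ψ v = 1 := hψ 1
  have hψf : ψ (f v) = 0 := hψ 2
  by_contra! h
  obtain ⟨-, c, hc⟩ := h φ v hφv hφf
  obtain ⟨-, d, hd⟩ := h ψ v hψv hψf
  have key₁ (x : V) (hx : φ x = 0) : f x - φ (f x) • v = c • x := by
    simpa using congrArg Subtype.val (LinearMap.congr_fun hc ⟨x, hx⟩)
  have key₂ (x : V) (hx : ψ x = 0) : f x - ψ (f x) • v = d • x := by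
    simpa using congrArg Subtype.val (LinearMap.congr_fun hd ⟨x, hx⟩)
  have hpair := LinearIndependent.pair_iff.1 hli
  have hcd : c = d := by
    have h₁ := key₁ (f v) hφf
    have h₂ := key₂ (f v) hψf
    have := hpair (φ (f (f v)) - ψ (f (f v))) (c - d) (by
      rw [sub_smul, sub_smul, ← h₁, ← h₂]; abel)
    exact sub_eq_zero.1 this.2
  subst hcd
  have h₁ := key₁ y hφy
  have h₂ := key₂ (y - v) (by simp [hψy, hψv])
  have := hpair (φ (f y) - ψ (f (y - v)) + c) (-1) (by
    have h₃ : c • y - c • (y - v) = c • v := by rw [smul_sub]; abel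
    rw [← h₁, ← h₂, map_sub f] at h₃
    rw [add_smul, sub_smul, ← h₃, map_sub f, neg_one_smul]; abel)
  simpa using this.2

theorem LinearMap.exists_basis_repr_castSucc_eq_zero {F : Type*} [Field F] (n : ℕ) {V : Type*}
    [AddCommGroup V] [Module F V] [FiniteDimensional F V] (f : End F V)
    (hV : finrank F V = n + 1) (hf : n = 0 ∨ ∀ c : F, f ≠ c • 1) :
    ∃ b : Basis (Fin (n + 1)) F V, ∀ i : Fin n, b.coord i.castSucc (f (b i.castSucc)) = 0 := by
  induction n generalizing V with
  | zero => exact ⟨finBasisOfFinrankEq F V hV, fun i ↦ i.elim0⟩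
  | succ n ih =>
    obtain ⟨φ, v, hv, hφ, hφ'⟩ := LinearMap.exists_compressKer_ne_smul
      (hf.resolve_left n.succ_ne_zero)
    have hφ₀ : φ ≠ 0 := by rintro rfl; simp at hv
    have hfr := Dual.finrank_ker_add_one_of_ne_zero hφ₀
    obtain ⟨b, hb⟩ := ih (f.compressKer φ v hv) (by lia) (hφ'.imp_left fun h ↦ by lia)
    obtain ⟨B, hB₀, hB⟩ := f.exists_basis_repr_compressKer φ v hv b
    refine ⟨B, Fin.cases ?_ fun i ↦ ?_⟩
    · exact hB₀.trans hφ
    · exact (hB i.castSucc).trans (hb i)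

/-- A non-scalar endomorphism of trace zero has a matrix with zero diagonal. -/
theorem LinearMap.exists_basis_repr_eq_zero_of_trace_eq_zero [FiniteDimensional F V]
    {f : End F V} (hf : ∀ c : F, f ≠ c • 1) (htr : LinearMap.trace F V f = 0) :
    ∃ (n : ℕ) (b : Basis (Fin n) F V), ∀ i, LinearMap.toMatrix b b f i i = 0 := by
  obtain h | h := (finrank F V).eq_zero_or_eq_succ_pred
  · exact ⟨0, finBasisOfFinrankEq F V h, fun i ↦ i.elim0⟩
  obtain ⟨b, hb⟩ := f.exists_basis_repr_castSucc_eq_zero _ h (.inr hf)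
  have hb' (i) : LinearMap.toMatrix b b f (Fin.castSucc i) i.castSucc = 0 := by
    simpa [LinearMap.toMatrix_apply] using hb i
  refine ⟨_, b, Fin.lastCases ?_ hb'⟩
  rw [LinearMap.trace_eq_matrix_trace F b, Matrix.trace, Fin.sum_univ_castSucc] at htr
  simpa [hb'] using htr

theorem Matrix.IsUpperTriangular.isNilpotent {n R : Type*} [CommRing R] [Fintype n]
    [LinearOrder n] {M : Matrix n n R} (hM : M.IsUpperTriangular) (h : ∀ i, M i i = 0) :
    IsNilpotent M := by
  refine ⟨Fintype.card n, ?_⟩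
  simpa [Matrix.charpoly_of_isUpperTriangular M hM, h] using M.aeval_self_charpoly

theorem LinearMap.exists_four_sq_eq_zero_of_ne_smul [FiniteDimensional F V]
    {f : End F V} (hf : ∀ c : F, f ≠ c • 1) (htr : LinearMap.trace F V f = 0) :
    ∃ f₁ f₂ f₃ f₄ : End F V,
      f₁ ^ 2 = 0 ∧ f₂ ^ 2 = 0 ∧ f₃ ^ 2 = 0 ∧ f₄ ^ 2 = 0 ∧ f = f₁ + f₂ + f₃ + f₄ := by
  obtain ⟨n, b, hb⟩ := LinearMap.exists_basis_repr_eq_zero_of_trace_eq_zero hf htr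
  set M := LinearMap.toMatrix b b f with hM
  let P : Matrix (Fin n) (Fin n) F := .of fun i j ↦ if i < j then M i j else 0
  let Q : Matrix (Fin n) (Fin n) F := .of fun i j ↦ if j < i then M i j else 0
  have hPQ : M = P + Q := by
    ext i j
    obtain h | rfl | h := lt_trichotomy i j
    · simp [P, Q, h, h.not_gt]
    · simp [P, Q, hb]
    · simp [P, Q, h, h.not_gt]
  have hP : IsNilpotent P :=
    Matrix.IsUpperTriangular.isNilpotent (fun i j h ↦ by simp [P, (show j < i from h).not_gt])
      (by simp [P])
  have hQ : IsNilpotent Q := by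
    rw [← Matrix.isNilpotent_transpose_iff]
    exact Matrix.IsUpperTriangular.isNilpotent
      (fun i j h ↦ by simp [Q, (show j < i from h).not_gt]) (by simp [Q])
  obtain ⟨f₁, f₂, h₁, h₂, h₁₂⟩ := (hP.map (Matrix.toLinAlgEquiv b)).exists_add_sq_eq_zero
  obtain ⟨f₃, f₄, h₃, h₄, h₃₄⟩ := (hQ.map (Matrix.toLinAlgEquiv b)).exists_add_sq_eq_zero
  refine ⟨f₁, f₂, f₃, f₄, h₁, h₂, h₃, h₄, ?_⟩
  rw [add_assoc, ← h₃₄, ← h₁₂, ← map_add, ← hPQ]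
  exact (Matrix.toLin_toMatrix b b f).symm

end Endomorphisms

section Scalar

variable {R : Type*} [Ring R]

theorem exists_add_sq_eq_zero_of_anticommute {c D S : R} (hc : ∀ x, c * x = x * c)
    (h2 : 2 * c = 1) (hS : S * S = 1) (hSD : S * D = -(D * S)) :
    ∃ B₁ B₂ : R, B₁ ^ 2 = 0 ∧ B₂ ^ 2 = 0 ∧ D = B₁ + B₂ := by
  have h (T : R) (hT : T * T = 1) (hTD : T * D = -(D * T)) : (c * (D + D * T)) ^ 2 = 0 := by
    have : (D + D * T) * (D + D * T) = 0 := by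
      calc _ = D * D + D * D * T + D * (T * D) + D * (T * D) * T := by noncomm_ring
        _ = D * D - D * D * (T * T) := by rw [hTD]; noncomm_ring
        _ = 0 := by rw [hT]; simp
    rw [(show Commute c _ from hc _).mul_pow, pow_two (D + D * T), this, mul_zero]
  refine ⟨c * (D + D * S), c * (D + D * -S), h S hS hSD, h (-S) (by simpa) (by simp [hSD]), ?_⟩
  calc D = 2 * c * D := by rw [h2, one_mul]
    _ = _ := by noncomm_ring

end Scalar

theorem Matrix.diagonal_exists_add_sq_eq_zero {n F : Type*} [Fintype n] [DecidableEq n] [Field F]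
    (h2 : (2 : F) ≠ 0) (d : n → F) (σ : Equiv.Perm n) (hσ : ∀ i, σ (σ i) = i)
    (hd : ∀ i, d (σ i) = -d i) :
    ∃ B₁ B₂ : Matrix n n F, B₁ ^ 2 = 0 ∧ B₂ ^ 2 = 0 ∧ Matrix.diagonal d = B₁ + B₂ := by
  refine exists_add_sq_eq_zero_of_anticommute (c := Matrix.scalar n (2⁻¹ : F))
    (S := σ.permMatrix F) (fun x ↦ ?_) ?_ ?_ ?_
  · exact Matrix.scalar_commute _ (Commute.all _) x
  · rw [← map_ofNat (Matrix.scalar n) 2, ← map_mul, mul_inv_cancel₀ h2, map_one]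
  · rw [← Matrix.permMatrix_mul, (Equiv.ext hσ : σ * σ = 1), Matrix.permMatrix_one]
  · ext i j
    by_cases h : σ i = j
    · subst h
      simp [hd]
    · simp [h]

theorem Matrix.exists_three_sq_eq_zero_of_scalar_of_charTwo {m F : Type*} [Fintype m]
    [DecidableEq m] [Field F] [CharP F 2] (c : F) :
    ∃ B₁ B₂ B₃ : Matrix (m ⊕ m) (m ⊕ m) F,
      B₁ ^ 2 = 0 ∧ B₂ ^ 2 = 0 ∧ B₃ ^ 2 = 0 ∧ Matrix.scalar (m ⊕ m) c = B₁ + B₂ + B₃ := by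
  let C : Matrix m m F := Matrix.scalar m c
  have hC : C + C = 0 := by
    rw [← map_add, CharTwo.add_self_eq_zero, map_zero]
  refine ⟨.fromBlocks 0 C 0 0, .fromBlocks 0 0 C 0, .fromBlocks C C C C, ?_, ?_, ?_, ?_⟩
  · simp [pow_two, Matrix.fromBlocks_multiply]
  · simp [pow_two, Matrix.fromBlocks_multiply]
  · simp [pow_two, Matrix.fromBlocks_multiply, ← mul_add, hC]
  · simp only [Matrix.fromBlocks_add, zero_add, add_zero, hC]
    simp [C, Matrix.fromBlocks_diagonal, Sum.elim_lam_const_lam_const]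

theorem Matrix.exists_four_sq_eq_zero_of_scalar_zmod {F : Type*} [Field F] (h2 : (2 : F) ≠ 0)
    {n p : ℕ} [NeZero n] [CharP F p] (hpn : p ∣ n) (c : F) :
    ∃ B₁ B₂ B₃ B₄ : Matrix (ZMod n) (ZMod n) F,
      B₁ ^ 2 = 0 ∧ B₂ ^ 2 = 0 ∧ B₃ ^ 2 = 0 ∧ B₄ ^ 2 = 0 ∧
        Matrix.scalar (ZMod n) c = B₁ + B₂ + B₃ + B₄ := by
  let e : ZMod n →+* F := ZMod.castHom hpn F
  obtain ⟨B₁, B₂, h₁, h₂, h₁₂⟩ := Matrix.diagonal_exists_add_sq_eq_zero h2 (fun i ↦ c * e i)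
    (Equiv.neg _) neg_neg (fun i ↦ by simp)
  obtain ⟨B₃, B₄, h₃, h₄, h₃₄⟩ := Matrix.diagonal_exists_add_sq_eq_zero h2
    (fun i ↦ c * (1 - e i)) (Equiv.subLeft 2) (by simp)
    (fun i ↦ by simp only [Equiv.subLeft_apply, map_sub, map_ofNat]; ring)
  refine ⟨B₁, B₂, B₃, B₄, h₁, h₂, h₃, h₄, ?_⟩
  rw [add_assoc, ← h₁₂, ← h₃₄, Matrix.diagonal_add, Matrix.scalar_apply]
  congr 1
  ext i
  ring

theorem Matrix.exists_four_sq_eq_zero_of_scalar {F : Type*} [Field F] {n p : ℕ} [CharP F p]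
    (hpn : p ∣ n) (c : F) :
    ∃ B₁ B₂ B₃ B₄ : Matrix (Fin n) (Fin n) F,
      B₁ ^ 2 = 0 ∧ B₂ ^ 2 = 0 ∧ B₃ ^ 2 = 0 ∧ B₄ ^ 2 = 0 ∧
        Matrix.scalar (Fin n) c = B₁ + B₂ + B₃ + B₄ := by
  obtain _ | n := n
  · exact ⟨0, 0, 0, 0, by simp, by simp, by simp, by simp, Subsingleton.elim _ _⟩
  by_cases h2 : (2 : F) = 0
  · have : CharP F 2 := CharTwo.of_one_ne_zero_of_two_eq_zero one_ne_zero h2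
    obtain rfl : p = 2 := CharP.eq F ‹_› ‹_›
    obtain ⟨m, hm⟩ := even_iff_two_dvd.2 hpn
    rw [hm]
    obtain ⟨B₁, B₂, B₃, h₁, h₂, h₃, h⟩ :=
      Matrix.exists_three_sq_eq_zero_of_scalar_of_charTwo (m := Fin m) c
    let e := Matrix.reindexAlgEquiv F F (finSumFinEquiv (m := m) (n := m))
    refine ⟨e B₁, e B₂, e B₃, 0, ?_, ?_, ?_, by simp, ?_⟩
    · rw [← map_pow, h₁, map_zero]
    · rw [← map_pow, h₂, map_zero]
    · rw [← map_pow, h₃, map_zero]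
    · rw [add_zero, ← map_add, ← map_add, ← h]
      exact (e.commutes c).symm
  · exact Matrix.exists_four_sq_eq_zero_of_scalar_zmod h2 hpn c

/-- Every trace-zero matrix over `ℤ/ℓℤ` (`ℓ` prime) is a sum of four
square-zero matrices. -/
theorem stmt_13 (n ℓ : ℕ) (hℓ : ℓ.Prime) (A : Matrix (Fin n) (Fin n) (ZMod ℓ))
    (hA : Matrix.trace A = 0) :
    ∃ B₁ B₂ B₃ B₄ : Matrix (Fin n) (Fin n) (ZMod ℓ),
      B₁ ^ 2 = 0 ∧ B₂ ^ 2 = 0 ∧ B₃ ^ 2 = 0 ∧ B₄ ^ 2 = 0 ∧ A = B₁ + B₂ + B₃ + B₄ := by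
  have : Fact ℓ.Prime := ⟨hℓ⟩
  by_cases h : ∃ c, A = Matrix.scalar (Fin n) c
  · obtain ⟨c, rfl⟩ := h
    obtain rfl | hc := eq_or_ne c 0
    · exact ⟨0, 0, 0, 0, by simp⟩
    refine Matrix.exists_four_sq_eq_zero_of_scalar (p := ℓ) ?_ c
    rw [← ZMod.natCast_eq_zero_iff]
    simpa [Matrix.trace, hc] using hA
  push Not at h
  obtain ⟨f₁, f₂, f₃, f₄, h₁, h₂, h₃, h₄, hf⟩ :=
    LinearMap.exists_four_sq_eq_zero_of_ne_smul (f := Matrix.toLinAlgEquiv' A)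
      (fun c hc ↦ h c <| Matrix.toLinAlgEquiv'.injective <| by
        rw [hc, ← map_one Matrix.toLinAlgEquiv', ← map_smul, Matrix.smul_one_eq_diagonal]
        rfl)
      ((Matrix.trace_toLin'_eq A).trans hA)
  refine ⟨LinearMap.toMatrixAlgEquiv' f₁, LinearMap.toMatrixAlgEquiv' f₂,
    LinearMap.toMatrixAlgEquiv' f₃, LinearMap.toMatrixAlgEquiv' f₄, ?_, ?_, ?_, ?_,
    ((LinearMap.toMatrixAlgEquiv'_toLinAlgEquiv' A).symm.trans
    (congrArg LinearMap.toMatrixAlgEquiv' hf)).trans (by simp only [map_add])⟩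
  all_goals simp [← map_pow, *]
end
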